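/- arXiv:0802.2824 — 4 statements merged into one kernel-verified Lean document; each statement's English description precedes it below -/
import Mathlib

section
/- Let r be even. The map ρ sending π ∈ G(r,n) to the linear endomorphism of V_{r,n} defined by ρ(π)C_w := sign_e(π,w) · C_{π w πᵗ} (for w ∈ I_{r,n}) is a group homomorphism into GL(V_{r,n}), and for every π ∈ G(r,n) the trace of ρ(π) equals ∑_{χ ∈ Irr(G(r,n))} χ(π); i.e. ρ is a Gelfand model for G(r,n). -/
open Finset CategoryTheory

/-- The wreath product `ℤ_r ≀ S_n`: elements are pairs `(σ, z)` with
`σ` a permutation of `{1,…,n}` and `z ∈ (ℤ/rℤ)^n`.  The multiplication is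
`(σ,c)·(τ,d) = (στ, (c_{τ⁻¹(i)} + d_i)_i)`, where in the paper's convention
permutations compose left-to-right; translated to Lean's convention
(`(σ * τ) x = σ (τ x)`) this reads `(σ,c)·(τ,d) = (σ * τ, fun i => c (τ i) + d i)`,
i.e. the semidirect product of `Fin n → ZMod r` by `Equiv.Perm (Fin n)`
acting by permuting coordinates. -/
def Wreath (r n : ℕ) : Type := Equiv.Perm (Fin n) × (Fin n → ZMod r)

namespace Wreath

variable {r n : ℕ}

instance : Group (Wreath r n) where
  mul v w := ⟨v.1 * w.1, fun i => v.2 (w.1 i) + w.2 i⟩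
  one := ⟨1, 0⟩
  inv v := ⟨v.1⁻¹, fun i => -v.2 (v.1⁻¹ i)⟩
  mul_assoc a b c := Prod.ext (mul_assoc _ _ _) (funext fun i => add_assoc _ _ _)
  one_mul a := by
    refine Prod.ext (one_mul _) (funext fun i => ?_)
    show (0 : Fin n → ZMod r) (a.1 i) + a.2 i = a.2 i
    simp
  mul_one a := by
    refine Prod.ext (mul_one _) (funext fun i => ?_)
    show a.2 ((1 : Equiv.Perm (Fin n)) i) + (0 : Fin n → ZMod r) i = a.2 i
    simp
  inv_mul_cancel a := by
    refine Prod.ext (inv_mul_cancel _) (funext fun i => ?_)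
    show -a.2 (a.1⁻¹ (a.1 i)) + a.2 i = (0 : Fin n → ZMod r) i
    simp

instance [NeZero r] : Fintype (Wreath r n) :=
  inferInstanceAs (Fintype (Equiv.Perm (Fin n) × (Fin n → ZMod r)))

instance : DecidableEq (Wreath r n) :=
  inferInstanceAs (DecidableEq (Equiv.Perm (Fin n) × (Fin n → ZMod r)))

theorem mul_def (v w : Wreath r n) :
    v * w = ⟨v.1 * w.1, fun i => v.2 (w.1 i) + w.2 i⟩ := rfl

theorem one_def : (1 : Wreath r n) = ⟨1, 0⟩ := rfl

theorem inv_def (v : Wreath r n) : v⁻¹ = ⟨v.1⁻¹, fun i => -v.2 (v.1⁻¹ i)⟩ := rfl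

/-- The bar operation `(σ, z) ↦ (σ, −z)`. -/
def bar (v : Wreath r n) : Wreath r n := ⟨v.1, -v.2⟩

theorem bar_mul (v w : Wreath r n) : bar (v * w) = bar v * bar w := by
  refine Prod.ext rfl (funext fun i => ?_)
  show -(v.2 (w.1 i) + w.2 i) = -v.2 (w.1 i) + -w.2 i
  ring

theorem bar_bar (v : Wreath r n) : bar (bar v) = v := by
  refine Prod.ext rfl ?_
  show - - v.2 = v.2
  simp

/-- `bar` as a group automorphism. -/
def barAut : Wreath r n ≃* Wreath r n where
  toFun := bar
  invFun := bar
  left_inv := bar_bar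
  right_inv := bar_bar
  map_mul' := bar_mul

theorem bar_inv (v : Wreath r n) : bar v⁻¹ = (bar v)⁻¹ :=
  map_inv (barAut : Wreath r n ≃* Wreath r n) v

/-- `vᵗ := (v̄)⁻¹`. -/
def tr (v : Wreath r n) : Wreath r n := (bar v)⁻¹

/-- Conjugation `w ↦ π w πᵗ` maps absolute involutions to absolute involutions. -/
theorem conj_absInv {w : Wreath r n} (hw : w * bar w = 1) (π : Wreath r n) :
    (π * w * tr π) * bar (π * w * tr π) = 1 := by
  have h1 : bar (π * w * tr π) = bar π * bar w * π⁻¹ := by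
    rw [bar_mul, bar_mul, tr, bar_inv, bar_bar]
  calc (π * w * tr π) * bar (π * w * tr π)
      = π * (w * bar w) * π⁻¹ := by rw [h1, tr]; group
    _ = 1 := by rw [hw]; group

end Wreath

/-- The set of inversions of `σ`, encoded as ordered pairs `(i,j)` with `i < j`
and `σ j < σ i` (one representative for each unordered pair `{i,j}` with
`(j−i)(σ(j)−σ(i)) < 0`). -/
def invPairs {n : ℕ} (σ : Equiv.Perm (Fin n)) : Finset (Fin n × Fin n) :=
  Finset.univ.filter fun p => p.1 < p.2 ∧ σ p.2 < σ p.1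

/-- The 2-cycles of an involution `u`, encoded as ordered pairs `(i,j)` with `i < j`,
`u i = j` and `u j = i` (one representative for each unordered pair `{i,j}`). -/
def pairSet {n : ℕ} (u : Equiv.Perm (Fin n)) : Finset (Fin n × Fin n) :=
  Finset.univ.filter fun p => p.1 < p.2 ∧ u p.1 = p.2 ∧ u p.2 = p.1

/-- `sign_o(π,w) := (−1)^{#(Inv(|π|) ∩ Pair(|w|))}`. -/
def signO {r n : ℕ} (π w : Wreath r n) : ℤ :=
  (-1) ^ ((invPairs π.1 ∩ pairSet w.1).card)

/-- A family of finite-dimensional complex representations forming a complete set of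
pairwise non-isomorphic irreducible representations of `G`. -/
def IsCompleteIrrFamily {G : Type} [Monoid G] {ι : Type} (V : ι → FDRep ℂ G) : Prop :=
  (∀ i, Simple (V i)) ∧ (∀ i j, Nonempty (V i ≅ V j) → i = j) ∧
    ∀ W : FDRep ℂ G, Simple W → ∃ i, Nonempty (V i ≅ W)

/-- `I_{r,n}`: the set of absolute involutions in `G(r,n)`, i.e. elements `w` with
`w · w̄ = id`. -/
def AbsInv (r n : ℕ) : Type := {w : Wreath r n // w * Wreath.bar w = 1}

instance (r n : ℕ) : DecidableEq (AbsInv r n) :=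
  inferInstanceAs (DecidableEq {w : Wreath r n // w * Wreath.bar w = 1})

instance (r n : ℕ) [NeZero r] : Fintype (AbsInv r n) :=
  inferInstanceAs (Fintype {w : Wreath r n // w * Wreath.bar w = 1})

/-- The conjugation action `w ↦ π w πᵗ` on absolute involutions. -/
def conjAbs {r n : ℕ} (π : Wreath r n) (w : AbsInv r n) : AbsInv r n :=
  ⟨π * w.1 * Wreath.tr π, Wreath.conj_absInv w.2 π⟩

/-- `B(π,w)` (for even `r`): the set of indices `i` with `|w|(i) = i`,
`z_w(i) = 2k+1` odd with `k ∈ {0,…,r/2−1}`, and `k + z_π(i) ∈ {r/2,…,r−1}`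
(computed in `ℤ/rℤ`, identified with `{0,…,r−1}` via `ZMod.val`). -/
noncomputable def Bset {r n : ℕ} (π w : Wreath r n) : Finset (Fin n) := by
  classical exact Finset.univ.filter fun i => w.1 i = i ∧ ∃ k ∈ Finset.range (r / 2),
    (w.2 i).val = 2 * k + 1 ∧ r / 2 ≤ (((k : ℕ) : ZMod r) + π.2 i).val

/-- `sign_e(π,w) := (−1)^{#B(π,w)} · (−1)^{#(Inv(|π|) ∩ Pair(|w|))}`. -/
noncomputable def signE {r n : ℕ} (π w : Wreath r n) : ℤ :=
  (-1) ^ (Bset π w).card * (-1) ^ ((invPairs π.1 ∩ pairSet w.1).card)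


namespace GM

/-- splitting of a reduced finite-dimensional commutative algebra -/
theorem split_comm (R : Type) [CommRing R] [Algebra ℂ R] [Module.Finite ℂ R] [IsReduced R] :
    ∃ (ι : Type) (_ : Fintype ι) (f : ι → R), (∑ i, f i = 1) ∧ (∀ i j, i ≠ j → f i * f j = 0) ∧
      (∀ i, f i * f i = f i) ∧ (∀ i, f i ≠ 0) ∧ ∀ i x, ∃ c : ℂ, f i * x = c • f i := by
  classical
  haveI : IsArtinianRing R := IsArtinianRing.of_finite ℂ R
  letI : Fintype (MaximalSpectrum R) := Fintype.ofFinite _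
  let E := IsArtinianRing.equivPi R
  refine ⟨MaximalSpectrum R, inferInstance, fun m => E.symm (Pi.single m 1), ?_, ?_, ?_, ?_, ?_⟩
  · rw [← map_sum, Finset.univ_sum_single (fun m : MaximalSpectrum R => (1 : R ⧸ m.asIdeal))]
    exact map_one E.symm
  · intro i j hij
    rw [← map_mul]
    convert map_zero E.symm
    ext k
    by_cases h : k = i
    · subst h; simp [Pi.single_eq_of_ne hij]
    · simp [Pi.single_eq_of_ne h]
  · intro i
    rw [← map_mul, ← Pi.single_mul, one_mul]
  · intro i h
    rw [map_eq_zero_iff E.symm E.symm.injective] at h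
    have h1 := congrFun h i
    rw [Pi.single_eq_same] at h1
    haveI : Nontrivial (R ⧸ i.asIdeal) := Ideal.Quotient.nontrivial_iff.2 i.isMaximal.ne_top
    exact one_ne_zero h1
  · intro i x
    haveI := i.isMaximal
    letI : Field (R ⧸ i.asIdeal) := Ideal.Quotient.field _
    haveI : Module.Finite ℂ (R ⧸ i.asIdeal) := inferInstance
    have hb := IsAlgClosed.algebraMap_bijective_of_isIntegral (k := ℂ) (K := R ⧸ i.asIdeal)
    obtain ⟨c, hc⟩ := hb.2 (E x i)
    refine ⟨c, E.injective ?_⟩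
    rw [map_mul, AlgEquiv.apply_symm_apply]
    have h2 : c • E.symm (Pi.single i 1) = algebraMap ℂ R c * E.symm (Pi.single i 1) :=
      Algebra.smul_def _ _
    rw [h2, map_mul, AlgEquiv.apply_symm_apply]
    ext k
    by_cases h : k = i
    · subst h
      simp only [Pi.mul_apply, Pi.single_eq_same, one_mul, mul_one]
      rw [← hc]; rfl
    · simp [Pi.single_eq_of_ne h]

variable {G : Type} [Group G] [Fintype G]

/-- elements of the group algebra supported on a subgroup -/
def SA (H : Subgroup G) : Subalgebra ℂ (MonoidAlgebra ℂ G) where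
  carrier := {x | ∀ g, g ∉ H → x.coeff g = 0}
  mul_mem' := by
    intro x y hx hy g hg
    rw [MonoidAlgebra.coeff_mul_apply_left, Finsupp.sum]
    refine Finset.sum_eq_zero fun a _ => ?_
    by_cases ha : a ∈ H
    · rw [hy (a⁻¹ * g), mul_zero]
      intro h; exact hg (by simpa using H.mul_mem ha h)
    · rw [hx a ha, zero_mul]
  add_mem' := by
    intro x y hx hy g hg
    simp [hx g hg, hy g hg]
  algebraMap_mem' := by
    intro c g hg
    have : g ≠ 1 := fun h => hg (h ▸ H.one_mem)
    rw [Algebra.algebraMap_eq_smul_one]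
    simp [MonoidAlgebra.one_def, this, Finsupp.single_apply, Ne.symm this]

theorem single_mem_SA {H : Subgroup G} {h : G} (hh : h ∈ H) (c : ℂ) :
    MonoidAlgebra.single h c ∈ SA H := by
  intro g hg
  have : h ≠ g := fun e => hg (e ▸ hh)
  simp [Finsupp.single_apply, this]

theorem sum_single (x : MonoidAlgebra ℂ G) :
    x = ∑ g, MonoidAlgebra.single g (x.coeff g) := by
  conv_lhs => rw [← MonoidAlgebra.sum_coeff_single x]
  rw [Finsupp.sum_fintype]
  simp


open scoped Classical in
theorem SA_eq_sum {H : Subgroup G} {x : MonoidAlgebra ℂ G} (hx : x ∈ SA H) :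
    x = ∑ h ∈ univ.filter (· ∈ H), MonoidAlgebra.single (h : G) (x.coeff h) := by
  conv_lhs => rw [sum_single x]
  rw [Finset.sum_filter]
  refine Finset.sum_congr rfl fun g _ => ?_
  split_ifs with h
  · rfl
  · rw [hx g h, MonoidAlgebra.single_zero]

/-- the anti-automorphism of the group algebra -/
noncomputable def TT (t : G → G) : MonoidAlgebra ℂ G →ₗ[ℂ] MonoidAlgebra ℂ G where
  toFun := MonoidAlgebra.mapDomain t
  map_add' := MonoidAlgebra.mapDomain_add t
  map_smul' c x := by
    ext; simp [MonoidAlgebra.mapDomain, Finsupp.mapDomain_smul]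

theorem TT_single (t : G → G) (g : G) (c : ℂ) :
    TT t (MonoidAlgebra.single g c) = MonoidAlgebra.single (t g) c :=
  MonoidAlgebra.mapDomain_single

theorem TT_mul (t : G → G) (ht : ∀ g h, t (g * h) = t h * t g) (x y : MonoidAlgebra ℂ G) :
    TT t (x * y) = TT t y * TT t x := by
  induction x using MonoidAlgebra.induction_linear with
  | zero => simp
  | add f g hf hg => simp [add_mul, mul_add, hf, hg]
  | single a b =>
    induction y using MonoidAlgebra.induction_linear with
    | zero => simp
    | add f g hf hg => simp [add_mul, mul_add, hf, hg]
    | single c d => simp [TT_single, MonoidAlgebra.single_mul_single, ht, mul_comm]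

open scoped Classical in
/-- averaging over a subgroup -/
noncomputable def zeta (H : Subgroup G) (x : MonoidAlgebra ℂ G) : MonoidAlgebra ℂ G :=
  ∑ h ∈ univ.filter (· ∈ H), MonoidAlgebra.single h 1 * x * MonoidAlgebra.single h⁻¹ 1

theorem zeta_comm_single (H : Subgroup G) (x : MonoidAlgebra ℂ G) {k : G} (hk : k ∈ H) (c : ℂ) :
    MonoidAlgebra.single k c * zeta H x = zeta H x * MonoidAlgebra.single k c := by
  classical
  unfold zeta
  rw [Finset.mul_sum, Finset.sum_mul]
  refine Finset.sum_bij' (fun h _ => k * h) (fun h _ => k⁻¹ * h) ?_ ?_ ?_ ?_ ?_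
  · intro h hh; simp only [mem_filter, mem_univ, true_and] at hh ⊢; exact H.mul_mem hk hh
  · intro h hh; simp only [mem_filter, mem_univ, true_and] at hh ⊢
    exact H.mul_mem (H.inv_mem hk) hh
  · intros; simp
  · intros; simp
  · intro h _
    have e1 : MonoidAlgebra.single k c * (MonoidAlgebra.single h 1 * x *
        MonoidAlgebra.single h⁻¹ 1) = c • (MonoidAlgebra.single (k * h) (1 : ℂ) * x *
        MonoidAlgebra.single h⁻¹ 1) := by
      rw [← mul_assoc, ← mul_assoc, MonoidAlgebra.single_mul_single, ← smul_mul_assoc,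
        ← smul_mul_assoc, MonoidAlgebra.smul_single, smul_eq_mul]
    have e2 : MonoidAlgebra.single (k * h) 1 * x * MonoidAlgebra.single (k * h)⁻¹ 1 *
        MonoidAlgebra.single k c = c • (MonoidAlgebra.single (k * h) (1 : ℂ) * x *
        MonoidAlgebra.single h⁻¹ 1) := by
      rw [mul_assoc (MonoidAlgebra.single (k * h) (1 : ℂ) * x), MonoidAlgebra.single_mul_single,
        ← mul_smul_comm, MonoidAlgebra.smul_single, smul_eq_mul, mul_inv_rev,
        inv_mul_cancel_right, one_mul, mul_one]
    rw [e1, e2]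

theorem zeta_comm (H : Subgroup G) (x : MonoidAlgebra ℂ G) {y : MonoidAlgebra ℂ G}
    (hy : y ∈ SA H) : y * zeta H x = zeta H x * y := by
  classical
  rw [SA_eq_sum hy, Finset.sum_mul, Finset.mul_sum]
  refine Finset.sum_congr rfl fun h hh => ?_
  simp only [mem_filter, mem_univ, true_and] at hh
  exact zeta_comm_single H x hh _

theorem zeta_add (H : Subgroup G) (x y : MonoidAlgebra ℂ G) :
    zeta H (x + y) = zeta H x + zeta H y := by
  simp [zeta, mul_add, add_mul, Finset.sum_add_distrib]

theorem zeta_sum (H : Subgroup G) {ι : Type} (s : Finset ι) (f : ι → MonoidAlgebra ℂ G) :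
    zeta H (∑ i ∈ s, f i) = ∑ i ∈ s, zeta H (f i) := by
  unfold zeta
  rw [Finset.sum_comm]
  refine Finset.sum_congr rfl fun h _ => ?_
  rw [Finset.mul_sum, Finset.sum_mul]

theorem zeta_conj (H : Subgroup G) (g : G) (c : ℂ) {k : G} (hk : k ∈ H) :
    zeta H (MonoidAlgebra.single (k * g * k⁻¹) c) = zeta H (MonoidAlgebra.single g c) := by
  classical
  unfold zeta
  refine Finset.sum_bij' (fun h _ => h * k) (fun h _ => h * k⁻¹) ?_ ?_ ?_ ?_ ?_
  · intro h hh; simp only [mem_filter, mem_univ, true_and] at hh ⊢; exact H.mul_mem hh hk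
  · intro h hh; simp only [mem_filter, mem_univ, true_and] at hh ⊢
    exact H.mul_mem hh (H.inv_mem hk)
  · intros; simp
  · intros; simp
  · intro h _
    simp [MonoidAlgebra.single_mul_single, mul_assoc]

theorem TT_zeta (t : G → G) (ht : ∀ g h, t (g * h) = t h * t g) (hti : ∀ g, t (t g) = g)
    (H K : Subgroup G)
    (htH : ∀ h ∈ H, t h ∈ H) (hc : ∀ g ∈ K, ∃ h ∈ H, h * g * h⁻¹ = t g)
    {x : MonoidAlgebra ℂ G} (hx : x ∈ SA K) : TT t (zeta H x) = zeta H x := by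
  classical
  have ht1 : t 1 = 1 := by
    have := ht 1 1; rw [mul_one] at this; exact left_eq_mul.1 this
  have htinv : ∀ g, t g⁻¹ = (t g)⁻¹ := fun g => by
    rw [eq_inv_iff_mul_eq_one, ← ht, mul_inv_cancel, ht1]
  rw [SA_eq_sum hx, zeta_sum, map_sum]
  refine Finset.sum_congr rfl fun g hg => ?_
  simp only [mem_filter, mem_univ, true_and] at hg
  obtain ⟨k, hk, hkg⟩ := hc g hg
  have e1 : zeta H (MonoidAlgebra.single g (x.coeff g)) =
      zeta H (MonoidAlgebra.single (t g) (x.coeff g)) := by rw [← hkg, zeta_conj H g _ hk]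
  conv_rhs => rw [e1]
  unfold zeta
  rw [map_sum]
  refine Finset.sum_bij' (fun h _ => t h⁻¹) (fun h _ => t h⁻¹) ?_ ?_ ?_ ?_ ?_
  · intro h hh; simp only [mem_filter, mem_univ, true_and] at hh ⊢
    exact htH _ (H.inv_mem hh)
  · intro h hh; simp only [mem_filter, mem_univ, true_and] at hh ⊢
    exact htH _ (H.inv_mem hh)
  · intros; simp [htinv, hti]
  · intros; simp [htinv, hti]
  · intro h _
    simp [MonoidAlgebra.single_mul_single, TT_single, ht, htinv, mul_assoc]

/-- coefficient at one -/
theorem coeff_one_mul_comm (x y : MonoidAlgebra ℂ G) : (x * y).coeff 1 = (y * x).coeff 1 := by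
  classical
  rw [MonoidAlgebra.coeff_mul_apply_left, MonoidAlgebra.coeff_mul_apply_right]
  refine Finsupp.sum_congr fun a _ => ?_
  simp [mul_comm]

theorem zeta_mul_e (H : Subgroup G) {e x : MonoidAlgebra ℂ G} (heH : e ∈ SA H)
    (he : e * e = e) (hsc : ∀ y ∈ SA H, ∃ c : ℂ, e * y * e = c • e) (hx : x * e = x)
    (hx' : e * x = x) :
    e.coeff 1 • (zeta H x * e) = x := by
  classical
  have key : ∀ h ∈ H, e.coeff 1 • (e * MonoidAlgebra.single h⁻¹ 1 * e) = e.coeff h • e := by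
    intro h hh
    obtain ⟨c, hc⟩ := hsc _ (single_mem_SA (H.inv_mem hh) 1)
    have h1 : (e * MonoidAlgebra.single h⁻¹ 1 * e).coeff 1 = e.coeff h := by
      rw [mul_assoc, coeff_one_mul_comm, mul_assoc, he, MonoidAlgebra.coeff_single_mul_apply]
      simp
    rw [hc] at h1 ⊢
    rw [← h1, smul_smul]
    simp [mul_comm]
  unfold zeta
  rw [Finset.sum_mul, Finset.smul_sum]
  have : ∀ h ∈ univ.filter (· ∈ H),
      e.coeff 1 • (MonoidAlgebra.single h 1 * x * MonoidAlgebra.single h⁻¹ 1 * e) =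
      MonoidAlgebra.single h (e.coeff h) * x := by
    intro h hh
    simp only [mem_filter, mem_univ, true_and] at hh
    have h3 : MonoidAlgebra.single h 1 * x * MonoidAlgebra.single h⁻¹ 1 * e =
        MonoidAlgebra.single h 1 * x * (e * MonoidAlgebra.single h⁻¹ 1 * e) := by
      conv_lhs => rw [← hx]
      simp only [mul_assoc]
    rw [h3, ← mul_smul_comm, key h hh, mul_smul_comm, mul_assoc, hx, ← smul_mul_assoc]
    simp [MonoidAlgebra.smul_single]
  rw [Finset.sum_congr rfl this, ← Finset.sum_mul, ← SA_eq_sum heH, hx']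

theorem trace_eq_coeff (f : MonoidAlgebra ℂ G →ₗ[ℂ] MonoidAlgebra ℂ G) :
    LinearMap.trace ℂ _ f = ∑ g, (f (MonoidAlgebra.single g 1)).coeff g := by
  classical
  rw [LinearMap.trace_eq_matrix_trace ℂ (MonoidAlgebra.basis G ℂ), Matrix.trace]
  refine Finset.sum_congr rfl fun g _ => ?_
  rw [Matrix.diag_apply, LinearMap.toMatrix_apply, MonoidAlgebra.basis_apply]
  rfl

theorem trace_mulLeft (x : MonoidAlgebra ℂ G) :
    LinearMap.trace ℂ _ (LinearMap.mulLeft ℂ x) = Fintype.card G * x.coeff 1 := by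
  classical
  rw [trace_eq_coeff]
  simp [MonoidAlgebra.coeff_mul_single_apply]

theorem exists_coeff_ne {H : Subgroup G} {x : MonoidAlgebra ℂ G} (hx : x ∈ SA H) (h0 : x ≠ 0) :
    ∃ y ∈ SA H, (x * y).coeff 1 ≠ 0 := by
  classical
  by_contra hcon
  push Not at hcon
  apply h0
  ext g
  by_cases hg : g ∈ H
  · have := hcon _ (single_mem_SA (H.inv_mem hg) 1)
    rw [MonoidAlgebra.coeff_mul_single_apply] at this
    simpa using this
  · exact hx g hg

end GM

namespace GM
variable {G : Type} [Group G] [Fintype G]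

/-- existence of a complete system of multiplicity free primitive idempotents -/
def PP (t : G → G) (H : Subgroup G) : Prop :=
  ∃ (ι : Type) (_ : Fintype ι) (e : ι → MonoidAlgebra ℂ G), (∀ a, e a ∈ SA H) ∧ ∑ a, e a = 1 ∧
    (∀ a b, a ≠ b → e a * e b = 0) ∧ (∀ a, e a * e a = e a) ∧ (∀ a, e a ≠ 0) ∧
    (∀ a, TT t (e a) = e a) ∧ ∀ a, ∀ x ∈ SA H, ∃ c : ℂ, e a * x * e a = c • e a

theorem SA_mono {H K : Subgroup G} (h : H ≤ K) : SA H ≤ SA K :=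
  fun x hx g hg => hx g fun h' => hg (h h')

theorem PP_bot (t : G → G) (ht : ∀ g h, t (g * h) = t h * t g) : PP t ⊥ := by
  have ht1 : t 1 = 1 := by
    have := ht 1 1; rw [mul_one] at this; exact left_eq_mul.1 this
  refine ⟨Unit, inferInstance, fun _ => 1, fun _ => Subalgebra.one_mem _, by simp, by simp,
    by simp, by simp, ?_, ?_⟩
  · intro _; rw [MonoidAlgebra.one_def, TT_single, ht1]
  · intro _ x hx
    refine ⟨x.coeff 1, ?_⟩
    rw [one_mul, mul_one]
    ext g
    by_cases hg : g = 1
    · subst hg; simp [MonoidAlgebra.one_def]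
    · rw [hx g (by simpa using hg)]
      simp [MonoidAlgebra.one_def, Finsupp.single_apply, Ne.symm hg]

theorem PP_step (t : G → G) (ht : ∀ g h, t (g * h) = t h * t g) (hti : ∀ g, t (t g) = g)
    {H K : Subgroup G} (hHK : H ≤ K)
    (htH : ∀ h ∈ H, t h ∈ H) (hc : ∀ g ∈ K, ∃ h ∈ H, h * g * h⁻¹ = t g)
    (hP : PP t H) : PP t K := by
  classical
  obtain ⟨ι, _, e, he, hsum, horth, hid, hne, hT, hsc⟩ := hP
  have heK : ∀ a, e a ∈ SA K := fun a => SA_mono hHK (he a)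
  have F : ∀ a, ∀ x ∈ SA K, e a * x = x → x * e a = x → TT t x = x := by
    intro a x hx h1 h2
    have h3 := zeta_mul_e H (he a) (hid a) (hsc a) h2 h1
    rw [← h3, map_smul, TT_mul t ht, hT, TT_zeta t ht hti H K htH hc hx, zeta_comm H x (he a)]
  let Z : Subalgebra ℂ (MonoidAlgebra ℂ G) := SA K ⊓ Subalgebra.centralizer ℂ (Set.range e)
  have hZ : ∀ x, x ∈ Z ↔ x ∈ SA K ∧ ∀ a, e a * x = x * e a := by
    intro x
    simp [Z, Algebra.mem_inf, Subalgebra.mem_centralizer_iff]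
  have hTZ : ∀ x ∈ Z, TT t x = x := by
    intro x hx
    rw [hZ] at hx
    have : x = ∑ a, e a * x := by rw [← Finset.sum_mul, hsum, one_mul]
    rw [this, map_sum]
    refine Finset.sum_congr rfl fun a _ => F a _ ((SA K).mul_mem (heK a) hx.1) ?_ ?_
    · rw [← mul_assoc, hid]
    · rw [mul_assoc, ← hx.2 a, ← mul_assoc, hid]
  have hcomm : ∀ x ∈ Z, ∀ y ∈ Z, x * y = y * x := by
    intro x hx y hy
    rw [← hTZ _ (Z.mul_mem hx hy), TT_mul t ht, hTZ x hx, hTZ y hy]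
  have hcompr : ∀ a, ∀ b ∈ SA K, e a * b * e a ∈ Z := by
    intro a b hb
    rw [hZ]
    refine ⟨(SA K).mul_mem ((SA K).mul_mem (heK a) hb) (heK a), fun c => ?_⟩
    by_cases h : c = a
    · subst h
      rw [← mul_assoc, ← mul_assoc, hid, mul_assoc (e c * b) (e c) (e c), hid]
    · rw [← mul_assoc, ← mul_assoc, horth c a h, mul_assoc _ _ (e c), horth a c (Ne.symm h)]
      simp
  have hred : ∀ x ∈ Z, x * x = 0 → x = 0 := by
    intro x hx hxx
    have hx' := (hZ x).1 hx
    have h0 : ∀ a, e a * x = 0 := by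
      intro a
      by_contra hne0
      obtain ⟨b, hb, hb0⟩ := exists_coeff_ne ((SA K).mul_mem (heK a) hx'.1) hne0
      have hsq : (e a * x * b) * (e a * x * b) = 0 := by
        have e1 : (e a * x * b) * (e a * x * b) = x * (e a * b * e a) * x * b := by
          rw [hx'.2 a]
          have : x * e a * b * (x * e a * b) = x * e a * b * (x * e a) * b := by
            simp only [mul_assoc]
          rw [this, ← hx'.2 a, ← mul_assoc, hx'.2 a]
          simp only [mul_assoc]
        rw [e1, mul_assoc x, hcomm _ (hcompr a b hb) _ hx, ← mul_assoc, hxx]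
        simp
      apply hb0
      have hn : IsNilpotent (LinearMap.mulLeft ℂ (e a * x * b)) := by
        refine ⟨2, ?_⟩
        rw [LinearMap.pow_mulLeft, pow_two, hsq]
        simp
      have h2 := (LinearMap.isNilpotent_trace_of_isNilpotent hn).eq_zero
      rw [trace_mulLeft] at h2
      rcases mul_eq_zero.1 h2 with h3 | h3
      · exact absurd h3 (by exact_mod_cast Fintype.card_ne_zero)
      · exact h3
    calc x = ∑ a, e a * x := by rw [← Finset.sum_mul, hsum, one_mul]
      _ = 0 := by simp [h0]
  have heZ : ∀ a, e a ∈ Z := by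
    intro a
    have := hcompr a 1 (SA K).one_mem
    rwa [mul_one, hid] at this
  letI : CommRing Z := { (inferInstance : Ring Z) with
    mul_comm := fun x y => Subtype.ext (hcomm _ x.2 _ y.2) }
  haveI : IsReduced Z := by
    rw [isReduced_iff_pow_one_lt 2 (by norm_num)]
    intro x hx
    have : (x : MonoidAlgebra ℂ G) * x = 0 := by
      have := congrArg Subtype.val hx
      rw [pow_two] at this
      exact this
    exact Subtype.ext (hred _ x.2 this)
  haveI : Module.Finite ℂ (MonoidAlgebra ℂ G) := Module.Finite.of_basis (MonoidAlgebra.basis G ℂ)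
  haveI : Module.Finite ℂ Z := inferInstanceAs (Module.Finite ℂ (Subalgebra.toSubmodule Z))
  obtain ⟨κ, _, f, g1, g2, g3, g4, g5⟩ := split_comm Z
  refine ⟨κ, inferInstance, fun b => (f b : MonoidAlgebra ℂ G), fun b => ((hZ _).1 (f b).2).1,
    ?_, ?_, ?_, ?_, ?_, ?_⟩
  · have := congrArg Z.val g1
    rw [map_sum] at this
    exact this
  · intro a b hab; exact congrArg Subtype.val (g2 a b hab)
  · intro a; exact congrArg Subtype.val (g3 a)
  · intro a h; exact g4 a (Subtype.ext h)
  · intro a; exact hTZ _ (f a).2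
  · intro b x hx
    have hfK := ((hZ _).1 (f b).2).1
    have hm : (f b : MonoidAlgebra ℂ G) * x * f b ∈ Z := by
      rw [hZ]
      refine ⟨(SA K).mul_mem ((SA K).mul_mem hfK hx) hfK, fun a => ?_⟩
      obtain ⟨c, hc⟩ := g5 b ⟨e a, heZ a⟩
      have hc1 : (f b : MonoidAlgebra ℂ G) * e a = c • (f b : MonoidAlgebra ℂ G) :=
        congrArg Subtype.val hc
      have hc2 := ((hZ _).1 (f b).2).2 a
      rw [mul_assoc _ _ (e a), hc1, ← mul_assoc, ← mul_assoc, hc2, hc1]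
      simp
    obtain ⟨c, hc⟩ := g5 b ⟨_, hm⟩
    have hc1 : (f b : MonoidAlgebra ℂ G) * (f b * x * f b) = c • (f b : MonoidAlgebra ℂ G) :=
      congrArg Subtype.val hc
    have h3 : (f b : MonoidAlgebra ℂ G) * f b = f b := congrArg Subtype.val (g3 b)
    refine ⟨c, ?_⟩
    rw [← hc1, ← mul_assoc, ← mul_assoc, h3]

end GM

namespace GM
variable {G : Type} [Group G] [Fintype G]

instance : Module.Finite ℂ (MonoidAlgebra ℂ G) := Module.Finite.of_basis (MonoidAlgebra.basis G ℂ)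

/-- the left ideal generated by an element -/
noncomputable def LI (e : MonoidAlgebra ℂ G) : Submodule ℂ (MonoidAlgebra ℂ G) :=
  LinearMap.range (LinearMap.mulRight ℂ e)

theorem mem_LI {e : MonoidAlgebra ℂ G} (he : e * e = e) {x : MonoidAlgebra ℂ G} :
    x ∈ LI e ↔ x * e = x := by
  constructor
  · rintro ⟨y, rfl⟩
    simp [mul_assoc, he]
  · intro h; exact ⟨x, by simp [h]⟩

/-- the representation on the left ideal -/
noncomputable def LIrep (e : MonoidAlgebra ℂ G) : Representation ℂ G (LI e) where
  toFun g := (LinearMap.mulLeft ℂ (MonoidAlgebra.single g (1 : ℂ))).restrict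
    (p := LI e) (q := LI e) (by
      rintro _ ⟨y, rfl⟩
      exact ⟨MonoidAlgebra.single g 1 * y, by simp [mul_assoc]⟩)
  map_one' := by
    ext x
    simp [← MonoidAlgebra.one_def]
  map_mul' g h := by
    refine LinearMap.ext fun x => Subtype.ext ?_
    show MonoidAlgebra.single (g * h) 1 * (x : MonoidAlgebra ℂ G) =
      MonoidAlgebra.single g 1 * (MonoidAlgebra.single h 1 * (x : MonoidAlgebra ℂ G))
    rw [← mul_assoc, MonoidAlgebra.single_mul_single, one_mul]

theorem trace_LIrep {e : MonoidAlgebra ℂ G} (he : e * e = e) (g : G) :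
    LinearMap.trace ℂ _ (LIrep e g) = ∑ h, e.coeff (h⁻¹ * g⁻¹ * h) := by
  classical
  have h1 : ∀ x, (LinearMap.mulLeft ℂ (MonoidAlgebra.single g (1 : ℂ)) *
      LinearMap.mulRight ℂ e : Module.End ℂ (MonoidAlgebra ℂ G)) x ∈ LI e := by
    intro x
    rw [mem_LI he]
    simp [mul_assoc, he]
  have h2 : LIrep e g = LinearMap.restrict (p := LI e) (q := LI e)
      (LinearMap.mulLeft ℂ (MonoidAlgebra.single g (1 : ℂ)) *
      LinearMap.mulRight ℂ e : Module.End ℂ (MonoidAlgebra ℂ G)) (fun x _ => h1 x) := by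
    refine LinearMap.ext fun x => Subtype.ext ?_
    show MonoidAlgebra.single g 1 * (x : MonoidAlgebra ℂ G) =
      MonoidAlgebra.single g 1 * ((x : MonoidAlgebra ℂ G) * e)
    rw [(mem_LI he).1 x.2]
  rw [h2, LinearMap.trace_restrict_eq_of_forall_mem _ _ h1, trace_eq_coeff]
  refine Finset.sum_congr rfl fun h _ => ?_
  simp only [Module.End.mul_apply, LinearMap.mulRight_apply, LinearMap.mulLeft_apply]
  rw [← mul_assoc, MonoidAlgebra.single_mul_single, MonoidAlgebra.coeff_single_mul_apply]
  simp

/-- the representation attached to an idempotent -/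
noncomputable abbrev MM (e : MonoidAlgebra ℂ G) : FDRep ℂ G := FDRep.of (LIrep e)

theorem trace_alg (V : FDRep ℂ G) (x : MonoidAlgebra ℂ G) :
    LinearMap.trace ℂ _ (Representation.asAlgebraHom V.ρ x) = ∑ g, x.coeff g * V.character g := by
  conv_lhs => rw [sum_single x]
  rw [map_sum, map_sum]
  refine Finset.sum_congr rfl fun g _ => ?_
  rw [Representation.asAlgebraHom_single, map_smul, smul_eq_mul]
  rfl

theorem finrank_hom {e : MonoidAlgebra ℂ G} (he : e * e = e) (V : FDRep ℂ G) :
    (Module.finrank ℂ (MM e ⟶ V) : ℂ) =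
      LinearMap.trace ℂ _ (Representation.asAlgebraHom V.ρ e) := by
  classical
  haveI : NeZero (Nat.card G : ℂ) := ⟨by exact_mod_cast Nat.card_pos.ne'⟩
  letI : Invertible (Nat.card G : ℂ) := invertibleOfNonzero (NeZero.ne _)
  rw [← FDRep.scalar_product_char_eq_finrank_equivariant, trace_alg]
  have h1 : ∀ g, (MM e).character g⁻¹ = ∑ h, e.coeff (h⁻¹ * g * h) := by
    intro g
    have := trace_LIrep he g⁻¹
    rw [inv_inv] at this
    exact this
  simp_rw [h1, Finset.mul_sum]
  rw [Finset.sum_comm]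
  have h2 : ∀ h : G, ∑ g, V.character g * e.coeff (h⁻¹ * g * h) =
      ∑ g, e.coeff g * V.character g := by
    intro h
    refine Fintype.sum_equiv (MulAut.conj h⁻¹).toEquiv _ _ fun g => ?_
    show V.character g * e.coeff (h⁻¹ * g * h) = e.coeff (h⁻¹ * g * h⁻¹⁻¹) *
      V.character (h⁻¹ * g * h⁻¹⁻¹)
    rw [FDRep.char_conj, inv_inv, mul_comm]
  simp_rw [← Finset.mul_sum]
  rw [Finset.sum_congr rfl fun h _ => h2 h, Finset.sum_const, nsmul_eq_mul,
    Finset.card_univ, ← Nat.card_eq_fintype_card, ← mul_assoc, inv_mul_cancel₀ (NeZero.ne _),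
    one_mul]

theorem exists_functional {e : MonoidAlgebra ℂ G} (he : e * e = e) (h0 : e ≠ 0)
    (hsc : ∀ x, ∃ c : ℂ, e * x * e = c • e) :
    LinearMap.trace ℂ _ (LinearMap.mulLeft ℂ e * LinearMap.mulRight ℂ e :
      Module.End ℂ (MonoidAlgebra ℂ G)) = 1 := by
  have : ∃ g, e.coeff g ≠ 0 := by
    by_contra h
    push Not at h
    exact h0 (by ext g; exact h g)
  obtain ⟨g, hg⟩ := this
  let φ : MonoidAlgebra ℂ G →ₗ[ℂ] ℂ := (e.coeff g)⁻¹ • ((MonoidAlgebra.basis G ℂ).coord g ∘ₗ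
    (LinearMap.mulLeft ℂ e * LinearMap.mulRight ℂ e : Module.End ℂ (MonoidAlgebra ℂ G)))
  have hφ : ∀ x, φ x = (e.coeff g)⁻¹ * (e * (x * e)).coeff g := fun x => rfl
  have h1 : (LinearMap.mulLeft ℂ e * LinearMap.mulRight ℂ e :
      Module.End ℂ (MonoidAlgebra ℂ G)) = φ.smulRight e := by
    refine LinearMap.ext fun x => ?_
    rw [LinearMap.smulRight_apply, hφ]
    simp only [Module.End.mul_apply, LinearMap.mulRight_apply, LinearMap.mulLeft_apply]
    rw [← mul_assoc]
    obtain ⟨c, hc⟩ := hsc x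
    rw [hc]
    congr 1
    simp only [MonoidAlgebra.coeff_smul, Finsupp.smul_apply, smul_eq_mul]
    field_simp
  rw [h1, LinearMap.trace_smulRight, hφ, he, he, inv_mul_cancel₀ hg]

theorem simple_MM {e : MonoidAlgebra ℂ G} (he : e * e = e) (h0 : e ≠ 0)
    (hsc : ∀ x, ∃ c : ℂ, e * x * e = c • e) : Simple (MM e) := by
  classical
  haveI : NeZero (Nat.card G : ℂ) := ⟨by exact_mod_cast Nat.card_pos.ne'⟩
  rw [FDRep.simple_iff_end_is_rank_one]
  have h1 := finrank_hom he (MM e)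
  have h2 : LinearMap.trace ℂ _ (Representation.asAlgebraHom (MM e).ρ e) = 1 := by
    rw [← exists_functional he h0 hsc]
    have h3 : ∀ x, (LinearMap.mulLeft ℂ e * LinearMap.mulRight ℂ e :
      Module.End ℂ (MonoidAlgebra ℂ G)) x ∈ LI e := by
      intro x
      rw [mem_LI he]
      simp [mul_assoc, he]
    rw [← LinearMap.trace_restrict_eq_of_forall_mem _ _ h3]
    congr 1
    have key : ∀ (y : MonoidAlgebra ℂ G) (x : LI e),
        ((Representation.asAlgebraHom (LIrep e) y x : LI e) : MonoidAlgebra ℂ G) = y * x := by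
      intro y x
      induction y using MonoidAlgebra.induction_linear with
      | zero => simp
      | add f g hf hg => simp [add_mul, hf, hg]
      | single g c =>
        rw [Representation.asAlgebraHom_single]
        show c • (MonoidAlgebra.single g 1 * (x : MonoidAlgebra ℂ G)) = _
        rw [← smul_mul_assoc, MonoidAlgebra.smul_single, smul_eq_mul, mul_one]
    refine LinearMap.ext fun x => Subtype.ext ?_
    refine (key e x).trans ?_
    show e * (x : MonoidAlgebra ℂ G) = e * ((x : MonoidAlgebra ℂ G) * e)
    rw [(mem_LI he).1 x.2]
  rw [h2] at h1
  exact_mod_cast h1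

theorem sum_char_eq_card {ι : Type} [Fintype ι] (V : ι → FDRep ℂ G)
    (hV1 : ∀ i, Simple (V i)) (hV2 : ∀ i j, Nonempty (V i ≅ V j) → i = j)
    (hV3 : ∀ W : FDRep ℂ G, Simple W → ∃ i, Nonempty (V i ≅ W))
    (t : G → G) (ht : ∀ g h, t (g * h) = t h * t g) 
    (hP : PP t (⊤ : Subgroup G)) [DecidableEq G] (π : G) :
    ∑ i, (V i).character π = ((univ.filter fun x => π * t x = x).card : ℂ) := by
  classical
  obtain ⟨κ, _, e, -, hsum, horth, hid, hne, hT, hsc⟩ := hP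
  have hsc' : ∀ a x, ∃ c : ℂ, e a * x * e a = c • e a := fun a x =>
    hsc a x (fun g hg => absurd (Subgroup.mem_top g) hg)
  let P : MonoidAlgebra ℂ G := MonoidAlgebra.single π 1
  choose μ hμ using fun a => hsc' a P
  have h1 : ∀ i, (V i).character π =
      ∑ a, μ a * LinearMap.trace ℂ _ (Representation.asAlgebraHom (V i).ρ (e a)) := by
    intro i
    have e1 : (V i).character π = LinearMap.trace ℂ _ (Representation.asAlgebraHom (V i).ρ P) := by
      rw [Representation.asAlgebraHom_single_one]; rfl
    have e2 : P = ∑ a, P * (e a * e a) := by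
      simp_rw [hid]; rw [← Finset.mul_sum, hsum, mul_one]
    rw [e1, e2, map_sum, map_sum]
    refine Finset.sum_congr rfl fun a _ => ?_
    rw [← mul_assoc, map_mul, LinearMap.trace_mul_comm, ← map_mul, ← mul_assoc, hμ, map_smul,
      map_smul, smul_eq_mul]
  have h2 : ∀ a, ∑ i, LinearMap.trace ℂ _ (Representation.asAlgebraHom (V i).ρ (e a)) = 1 := by
    intro a
    haveI := simple_MM (hid a) (hne a) (hsc' a)
    haveI := hV1
    obtain ⟨i0, ⟨iso⟩⟩ := hV3 (MM (e a)) inferInstance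
    simp_rw [← finrank_hom (hid a)]
    rw [Finset.sum_eq_single i0]
    · rw [FDRep.finrank_hom_simple_simple, if_pos ⟨iso.symm⟩]; simp
    · intro j _ hj
      rw [FDRep.finrank_hom_simple_simple, if_neg]
      · simp
      · rintro ⟨iso2⟩
        exact hj (hV2 _ _ ⟨iso2.symm ≪≫ iso.symm⟩)
    · simp
  have h3 : ∑ i, (V i).character π = ∑ a, μ a := by
    simp_rw [h1]
    rw [Finset.sum_comm]
    refine Finset.sum_congr rfl fun a _ => ?_
    rw [← Finset.mul_sum, h2, mul_one]
  rw [h3]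
  let L : Module.End ℂ (MonoidAlgebra ℂ G) := LinearMap.mulLeft ℂ P ∘ₗ TT t
  have hL : ∀ x, L x = P * TT t x := fun x => rfl
  have h4 : LinearMap.trace ℂ _ L = ((univ.filter fun x => π * t x = x).card : ℂ) := by
    rw [trace_eq_coeff, Finset.card_filter, Nat.cast_sum]
    refine Finset.sum_congr rfl fun g _ => ?_
    rw [hL, TT_single, MonoidAlgebra.single_mul_single]
    simp [Finsupp.single_apply]
  rw [← h4]
  let E : κ → κ → Module.End ℂ (MonoidAlgebra ℂ G) := fun a b =>
    LinearMap.mulLeft ℂ (e a) * LinearMap.mulRight ℂ (e b)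
  have hE : ∀ a b x, E a b x = e a * (x * e b) := fun a b x => rfl
  have hEsum : L = ∑ a, ∑ b, E a b * (E a b * L) := by
    refine LinearMap.ext fun x => ?_
    simp only [LinearMap.sum_apply, Module.End.mul_apply, hE]
    have : ∀ a b, e a * (e a * (L x * e b) * e b) = e a * (L x * e b) := by
      intro a b
      rw [mul_assoc (e a), mul_assoc (L x), hid, ← mul_assoc, hid]
    simp_rw [this, ← Finset.mul_sum, hsum, mul_one, ← Finset.sum_mul, hsum, one_mul]
  rw [hEsum, map_sum]
  refine Finset.sum_congr rfl fun a _ => ?_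
  rw [map_sum, Finset.sum_eq_single a]
  · rw [LinearMap.trace_mul_comm]
    have : E a a * L * E a a = μ a • E a a := by
      refine LinearMap.ext fun x => ?_
      simp only [Module.End.mul_apply, hE, hL, LinearMap.smul_apply]
      obtain ⟨c, hc⟩ := hsc' a x
      rw [← mul_assoc (e a) x, hc, map_smul, hT, mul_smul_comm, smul_mul_assoc, mul_smul_comm,
        mul_assoc, hid, ← mul_assoc, hμ, smul_comm]
    rw [this, map_smul, exists_functional (hid a) (hne a) (hsc' a), smul_eq_mul, mul_one]
  · intro b _ hb
    rw [LinearMap.trace_mul_comm]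
    have : E a b * L * E a b = 0 := by
      refine LinearMap.ext fun x => ?_
      simp only [Module.End.mul_apply, hE, hL, LinearMap.zero_apply]
      rw [TT_mul t ht, TT_mul t ht, hT, hT, mul_assoc P, mul_assoc _ (e a) (e b),
        horth a b (Ne.symm hb)]
      simp
    rw [this, map_zero]
  · simp

end GM

namespace GM
variable {r n : ℕ}

theorem tr_mk (v : Wreath r n) : Wreath.tr v = (⟨v.1⁻¹, fun i => v.2 (v.1⁻¹ i)⟩ : Wreath r n) := by
  refine Prod.ext rfl (funext fun i => ?_)
  show - (- v.2) (v.1⁻¹ i) = _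
  simp

theorem tr_mul (v w : Wreath r n) : Wreath.tr (v * w) = Wreath.tr w * Wreath.tr v := by
  unfold Wreath.tr; rw [Wreath.bar_mul, mul_inv_rev]

theorem tr_tr (v : Wreath r n) : Wreath.tr (Wreath.tr v) = v := by
  unfold Wreath.tr; rw [Wreath.bar_inv, Wreath.bar_bar, inv_inv]

section cyc
variable {X : Type} [Fintype X] [DecidableEq X] (σ : Equiv.Perm X)

theorem inv_pow_eq {b : X} {m m' : ℕ} (h : (σ ^ m) b = (σ ^ m') b) :
    (σ⁻¹ ^ m) b = (σ⁻¹ ^ m') b := by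
  have h1 : (σ ^ (-(m : ℤ) - m')) ((σ ^ (m : ℤ)) b) = (σ ^ (-(m : ℤ) - m')) ((σ ^ (m' : ℤ)) b) := by
    rw [zpow_natCast, zpow_natCast, h]
  rw [← Equiv.Perm.mul_apply, ← Equiv.Perm.mul_apply, ← zpow_add, ← zpow_add] at h1
  rw [show -(m : ℤ) - m' + m = -m' by ring, show -(m : ℤ) - m' + m' = -m by ring] at h1
  rw [inv_pow, inv_pow, ← zpow_natCast, ← zpow_natCast, ← zpow_neg, ← zpow_neg, h1]

variable {M : Type} [AddCommGroup M] (c : X → M)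

theorem A_well (b : X) (m p : ℕ) (h : (σ ^ (m + p)) b = (σ ^ m) b) :
    ∑ j ∈ range (m + p), (c ((σ⁻¹ ^ (j + 1)) b) - c ((σ ^ j) b)) =
    ∑ j ∈ range m, (c ((σ⁻¹ ^ (j + 1)) b) - c ((σ ^ j) b)) := by
  have hp : (σ ^ p) b = b := by
    rw [pow_add, Equiv.Perm.mul_apply] at h
    exact (σ ^ m).injective h
  have hp' : (σ⁻¹ ^ p) b = b := by
    rw [inv_pow, Equiv.Perm.inv_eq_iff_eq, hp]
  rw [add_comm m p, Finset.sum_range_add]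
  have h1 : ∑ j ∈ range p, (c ((σ⁻¹ ^ (j + 1)) b) - c ((σ ^ j) b)) = 0 := by
    rw [Finset.sum_sub_distrib, ← Finset.sum_range_reflect (fun j => c ((σ ^ j) b)), sub_eq_zero]
    refine Finset.sum_congr rfl fun j hj => ?_
    rw [mem_range] at hj
    congr 1
    rw [inv_pow, Equiv.Perm.inv_eq_iff_eq, ← Equiv.Perm.mul_apply, ← pow_add,
      show j + 1 + (p - 1 - j) = p by omega, hp]
  rw [h1, zero_add]
  refine Finset.sum_congr rfl fun j hj => ?_
  rw [show p + j + 1 = (j + 1) + p by ring, pow_add, Equiv.Perm.mul_apply, hp',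
    add_comm p j, pow_add σ j p, Equiv.Perm.mul_apply, hp]

theorem A_well' (b : X) (m m' : ℕ) (h : (σ ^ m) b = (σ ^ m') b) :
    ∑ j ∈ range m, (c ((σ⁻¹ ^ (j + 1)) b) - c ((σ ^ j) b)) =
    ∑ j ∈ range m', (c ((σ⁻¹ ^ (j + 1)) b) - c ((σ ^ j) b)) := by
  rcases le_total m m' with h1 | h1
  · obtain ⟨p, rfl⟩ := Nat.exists_eq_add_of_le h1
    rw [A_well σ c b m p h.symm]
  · obtain ⟨p, rfl⟩ := Nat.exists_eq_add_of_le h1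
    rw [A_well σ c b m' p h]

theorem exists_conj (kp : X) : ∃ (τ : Equiv.Perm X) (a : X → M), τ kp = kp ∧
    (∀ i, σ i = i → τ i = i) ∧ (∀ i, τ (σ i) = σ⁻¹ (τ i)) ∧
    ∀ i, a (σ i) + c i = c (σ⁻¹ (τ i)) + a i := by
  classical
  let S := Equiv.Perm.SameCycle.setoid σ
  let b : X → X := fun i => if σ.SameCycle i kp then kp else (Quotient.mk S i).out
  have hb : ∀ i, σ.SameCycle (b i) i := by
    intro i
    show σ.SameCycle (if σ.SameCycle i kp then kp else (Quotient.mk S i).out) i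
    split_ifs with h
    · exact h.symm
    · exact Quotient.exact (s := S) (Quotient.out_eq _)
  have hbs : ∀ i j, σ.SameCycle i j → b i = b j := by
    intro i j h
    have : Quotient.mk S i = Quotient.mk S j := Quotient.sound h
    have h2 : σ.SameCycle i kp ↔ σ.SameCycle j kp := ⟨fun h' => h.symm.trans h', fun h' => h.trans h'⟩
    simp only [b, this, h2]
  have hm : ∀ i, ∃ m : ℕ, (σ ^ m) (b i) = i := fun i => by
    obtain ⟨m, _, _, hm⟩ := (hb i).exists_pow_eq'' 
    exact ⟨m, hm⟩
  choose m hm using hm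
  let τ0 : X → X := fun i => (σ⁻¹ ^ m i) (b i)
  have hτb : ∀ i, b (τ0 i) = b i := by
    intro i
    have h1 : σ.SameCycle (τ0 i) (b i) := by
      refine ⟨m i, ?_⟩
      simp [τ0]
    rw [hbs _ _ h1, hbs _ _ (hb i)]
  have hinv : Function.Involutive τ0 := by
    intro i
    show (σ⁻¹ ^ m (τ0 i)) (b (τ0 i)) = i
    rw [hτb]
    have h1 := hm (τ0 i)
    rw [hτb] at h1
    rw [inv_pow, Equiv.Perm.inv_eq_iff_eq]
    have h2 : (σ ^ m i) (τ0 i) = b i := by simp [τ0]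
    rw [← h1] at h2
    rw [← h2, ← Equiv.Perm.mul_apply, ← pow_add, add_comm, pow_add, Equiv.Perm.mul_apply, hm]
  have hsb : ∀ i, b (σ i) = b i := fun i => hbs _ _ (by
    exact (Equiv.Perm.sameCycle_apply_left).2 (Equiv.Perm.SameCycle.refl _ _))
  have hms : ∀ i, (σ ^ m (σ i)) (b i) = (σ ^ (m i + 1)) (b i) := by
    intro i
    have := hm (σ i)
    rw [hsb] at this
    rw [this, pow_succ', Equiv.Perm.mul_apply, hm]
  refine ⟨hinv.toPerm, fun i => ∑ j ∈ range (m i), (c ((σ⁻¹ ^ (j + 1)) (b i)) - c ((σ ^ j) (b i))),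
    ?_, ?_, ?_, ?_⟩
  · show (σ⁻¹ ^ m kp) (b kp) = kp
    have h1 : b kp = kp := if_pos (Equiv.Perm.SameCycle.refl _ _)
    have h2 := hm kp
    rw [h1] at h2 ⊢
    rw [inv_pow, Equiv.Perm.inv_eq_iff_eq, h2]
  · intro i hi
    show (σ⁻¹ ^ m i) (b i) = i
    have h3 : ∀ k : ℕ, (σ ^ k) i = i := fun k => by
      induction k with
      | zero => rfl
      | succ k ih => rw [pow_succ', Equiv.Perm.mul_apply, ih, hi]
    have h1 : b i = i := by
      obtain ⟨k, _, _, hk⟩ := (hb i).symm.exists_pow_eq''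
      rw [h3] at hk; exact hk.symm
    rw [h1, inv_pow, Equiv.Perm.inv_eq_iff_eq, h3]
  · intro i
    show (σ⁻¹ ^ m (σ i)) (b (σ i)) = σ⁻¹ ((σ⁻¹ ^ m i) (b i))
    rw [hsb, inv_pow_eq σ (hms i), pow_succ', Equiv.Perm.mul_apply]
  · intro i
    show ∑ j ∈ range (m (σ i)), (c ((σ⁻¹ ^ (j + 1)) (b (σ i))) - c ((σ ^ j) (b (σ i)))) + c i =
      c (σ⁻¹ ((σ⁻¹ ^ m i) (b i))) + _
    rw [hsb, A_well' σ c _ _ _ (hms i), Finset.sum_range_succ, hm, pow_succ',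
      Equiv.Perm.mul_apply]
    abel
end cyc

/-- the chain of subgroups -/
def Hk (r n k : ℕ) : Subgroup (Wreath r n) where
  carrier := {g | ∀ i : Fin n, k ≤ i.val → g.1 i = i}
  mul_mem' := by
    intro a b ha hb i hi
    show a.1 (b.1 i) = i
    rw [hb i hi, ha i hi]
  one_mem' := fun i _ => rfl
  inv_mem' := by
    intro a ha i hi
    show a.1⁻¹ i = i
    rw [Equiv.Perm.inv_eq_iff_eq, ha i hi]

theorem PP_Hk [NeZero r] (k : ℕ) (hk : k ≤ n) : PP (Wreath.tr : Wreath r n → _) (Hk r n k) := by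
  induction k with
  | zero =>
    refine PP_step _ tr_mul tr_tr bot_le ?_ ?_ (PP_bot _ tr_mul)
    · intro h hh
      rw [Subgroup.mem_bot] at hh
      subst hh
      rw [Subgroup.mem_bot, tr_mk]
      refine Prod.ext (inv_one) rfl
    · intro g hg
      refine ⟨1, Subgroup.one_mem _, ?_⟩
      have h1 : g.1 = 1 := Equiv.ext fun i => hg i (Nat.zero_le _)
      rw [tr_mk]
      refine Eq.trans (b := g) (by simp) (Prod.ext ?_ ?_)
      · rw [h1]; simp
      · rw [h1]; simp
  | succ k ih =>
    refine PP_step _ tr_mul tr_tr (H := Hk r n k) ?_ ?_ ?_ (ih (by omega))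
    · intro g hg i hi
      exact hg i (by omega)
    · intro g hg i hi
      rw [tr_mk]
      show g.1⁻¹ i = i
      rw [Equiv.Perm.inv_eq_iff_eq, hg i hi]
    · intro g hg
      obtain ⟨τ, a, h1, h2, h3, h4⟩ := exists_conj g.1 g.2 (⟨k, by omega⟩ : Fin n)
      obtain ⟨h, rfl, rfl⟩ : ∃ h : Wreath r n, h.1 = τ ∧ h.2 = a := ⟨⟨τ, a⟩, rfl, rfl⟩
      refine ⟨h, ?_, ?_⟩
      · intro i hi
        by_cases hik : i.val = k
        · have : i = ⟨k, by omega⟩ := Fin.ext hik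
          rw [this]; exact h1
        · exact h2 i (hg i (by omega))
      · rw [mul_inv_eq_iff_eq_mul, tr_mk]
        refine Prod.ext (Equiv.ext fun i => h3 i) (funext fun i => h4 i)

theorem sum_char_wreath [NeZero r] {ι : Type} [Fintype ι] (V : ι → FDRep ℂ (Wreath r n))
    (hV : IsCompleteIrrFamily V) (π : Wreath r n) :
    ∑ i, (V i).character π = ((univ.filter fun x => π * Wreath.tr x = x).card : ℂ) := by
  refine sum_char_eq_card V hV.1 hV.2.1 hV.2.2 Wreath.tr tr_mul ?_ π
  have h := PP_Hk (r := r) (n := n) n le_rfl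
  have : Hk r n n = ⊤ := by
    rw [eq_top_iff]
    intro g _ i hi
    exact absurd i.2 (by omega)
  rwa [this] at h

end GM

namespace GM
variable {r : ℕ} [NeZero r]

/-- the sign attached to a fixed point -/
def sgn (x c : ZMod r) : ℤ :=
  if x.val % 2 = 1 ∧ r / 2 ≤ (((x.val / 2 : ℕ) : ZMod r) + c).val then -1 else 1

theorem val_shift (hr : Even r) (x c : ZMod r) :
    (x + 2 * c).val % 2 = x.val % 2 ∧
    ((((x.val / 2 : ℕ) : ZMod r) + c).val < r / 2 →
      (x + 2 * c).val / 2 = (((x.val / 2 : ℕ) : ZMod r) + c).val) ∧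
    (r / 2 ≤ (((x.val / 2 : ℕ) : ZMod r) + c).val →
      (x + 2 * c).val / 2 + r / 2 = (((x.val / 2 : ℕ) : ZMod r) + c).val) := by
  obtain ⟨h, rfl⟩ := hr
  set v := (((x.val / 2 : ℕ) : ZMod (h + h)) + c).val with hv
  have hvlt : v < h + h := ZMod.val_lt _
  have h1 : x + 2 * c = ((x.val % 2 + 2 * v : ℕ) : ZMod (h + h)) := by
    have hx : x = ((x.val % 2 + 2 * (x.val / 2) : ℕ) : ZMod (h + h)) := by
      rw [Nat.mod_add_div]; simp
    have hvv : (v : ZMod (h + h)) = ((x.val / 2 : ℕ) : ZMod (h + h)) + c := by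
      rw [hv, ZMod.natCast_zmod_val]
    conv_lhs => rw [hx]
    push_cast
    rw [hvv]
    ring
  have h2 : (x + 2 * c).val = (x.val % 2 + 2 * v) % (h + h) := by
    rw [h1, ZMod.val_natCast]
  rw [h2]
  by_cases hlt : v < h
  · have h3 : (x.val % 2 + 2 * v) % (h + h) = x.val % 2 + 2 * v := Nat.mod_eq_of_lt (by omega)
    rw [h3]
    omega
  · have h3 : (x.val % 2 + 2 * v) % (h + h) = x.val % 2 + 2 * v - (h + h) := by
      rw [Nat.mod_eq_sub_mod (a := x.val % 2 + 2 * v) (by omega)]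
      exact Nat.mod_eq_of_lt (by omega)
    rw [h3]
    omega

/-- the standard character -/
noncomputable abbrev ee : AddChar (ZMod r) ℂ := ZMod.stdAddChar

theorem ee_half (hr : Even r) (θ : ZMod r) : ee (θ * ((r / 2 : ℕ) : ZMod r)) = (-1) ^ θ.val := by
  have h1 : ee ((r / 2 : ℕ) : ZMod r) = -1 := by
    have := ZMod.stdAddChar_coe (N := r) ((r / 2 : ℕ) : ℤ)
    rw [Int.cast_natCast] at this
    show ZMod.stdAddChar ((r / 2 : ℕ) : ZMod r) = -1
    rw [this, ← Complex.exp_pi_mul_I]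
    congr 1
    obtain ⟨h, rfl⟩ := hr
    have h0 : (h : ℂ) ≠ 0 := by
      have := NeZero.ne (h + h)
      exact_mod_cast (by omega : h ≠ 0)
    rw [show (h + h) / 2 = h by omega]
    push_cast
    field_simp
    ring
  rw [← h1, ← AddChar.map_nsmul_eq_pow]
  congr 1
  rw [nsmul_eq_mul, ZMod.natCast_zmod_val]

/-- Fourier kernel at a fixed point -/
noncomputable def PF (x θ : ZMod r) : ℂ :=
  if θ.val % 2 = x.val % 2 then ee (θ * ((x.val / 2 : ℕ) : ZMod r)) else 0

theorem PF_shift (hr : Even r) (x c θ : ZMod r) :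
    (sgn x c : ℂ) * PF (x + 2 * c) θ = PF x θ * ee (θ * c) := by
  obtain ⟨h1, h2, h3⟩ := val_shift hr x c
  unfold PF sgn
  rw [h1]
  by_cases hp : θ.val % 2 = x.val % 2
  swap
  · simp [hp]
  rw [if_pos hp, if_pos hp, ← AddChar.map_add_eq_mul, ← mul_add]
  by_cases hv : (((x.val / 2 : ℕ) : ZMod r) + c).val < r / 2
  · rw [if_neg (by omega), h2 hv, ZMod.natCast_zmod_val]
    simp
  · push Not at hv
    have h4 := h3 hv
    have h5 : (((x.val / 2 : ℕ) : ZMod r) + c) =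
        (((x + 2 * c).val / 2 : ℕ) : ZMod r) + ((r / 2 : ℕ) : ZMod r) := by
      rw [← Nat.cast_add, h4, ZMod.natCast_zmod_val]
    conv_rhs => rw [h5, mul_add, AddChar.map_add_eq_mul, ee_half hr]
    rw [mul_comm]
    congr 1
    by_cases ho : x.val % 2 = 1
    · rw [if_pos ⟨ho, hv⟩, Odd.neg_one_pow (Nat.odd_iff.2 (by omega))]; simp
    · rw [if_neg (fun h => ho h.1), Even.neg_one_pow (Nat.even_iff.2 (by omega))]; simp

theorem sgn_cocycle (hr : Even r) (x c c' : ZMod r) :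
    sgn x (c + c') = sgn x c * sgn (x + 2 * c) c' := by
  obtain ⟨θ, hθ⟩ : ∃ θ : ZMod r, θ = x := ⟨x, rfl⟩
  have hne : ∀ y : ZMod r, y.val % 2 = x.val % 2 → PF y x ≠ 0 := by
    intro y hy
    unfold PF
    rw [if_pos hy.symm]
    intro h
    have h' := congrArg (fun z : ℂ => ‖z‖) h
    simp [AddChar.norm_apply] at h'
  have e1 := PF_shift hr x (c + c') x
  have e2 := PF_shift hr x c x
  have e3 := PF_shift hr (x + 2 * c) c' x
  have h1 := (val_shift hr x c).1
  have h2 := (val_shift hr (x + 2 * c) c').1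
  have e4 : x + 2 * (c + c') = x + 2 * c + 2 * c' := by ring
  rw [e4, mul_add, AddChar.map_add_eq_mul, ← mul_assoc, ← e2] at e1
  have h3 := hne _ (h2.trans h1)
  have : ((sgn x (c + c') : ℤ) : ℂ) = (sgn x c * sgn (x + 2 * c) c' : ℤ) := by
    push_cast
    apply mul_right_cancel₀ h3
    rw [e1, mul_assoc, mul_assoc, e3]
  exact_mod_cast this

/-- the inverse kernel -/
noncomputable def PF' (θ y : ZMod r) : ℂ :=
  if θ.val % 2 = y.val % 2 then ee (-(θ * ((y.val / 2 : ℕ) : ZMod r))) * 2 / r else 0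

theorem sum_ee (b : ZMod r) : ∑ θ : ZMod r, ee (θ * b) = if b = 0 then (r : ℂ) else 0 := by
  have := AddChar.sum_mulShift b (ZMod.isPrimitive_stdAddChar r)
  rw [this, ZMod.card]
  split_ifs <;> simp

theorem PF_inv (hr : Even r) (x y : ZMod r) :
    ∑ θ, PF x θ * PF' θ y = if x = y then 1 else 0 := by
  have hr0 : (r : ℂ) ≠ 0 := by exact_mod_cast NeZero.ne r
  by_cases hp : x.val % 2 = y.val % 2
  swap
  · rw [if_neg (by rintro rfl; exact hp rfl)]
    refine Finset.sum_eq_zero fun θ _ => ?_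
    unfold PF PF'
    split_ifs with h1 h2
    · exact absurd (h1.symm.trans h2) hp
    all_goals simp
  have key : ∀ θ : ZMod r, PF x θ * PF' θ y =
      (1 / r) * (ee (θ * (((x.val / 2 : ℕ) : ZMod r) - ((y.val / 2 : ℕ) : ZMod r))) + 
        (-1) ^ x.val * ee (θ * (((x.val / 2 : ℕ) : ZMod r) - ((y.val / 2 : ℕ) : ZMod r) +
          ((r / 2 : ℕ) : ZMod r)))) := by
    intro θ
    unfold PF PF'
    rw [← hp]
    rw [mul_add θ _ ((r / 2 : ℕ) : ZMod r), AddChar.map_add_eq_mul, ee_half hr]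
    have e1 : ee (θ * (((x.val / 2 : ℕ) : ZMod r) - ((y.val / 2 : ℕ) : ZMod r))) =
        ee (θ * ((x.val / 2 : ℕ) : ZMod r)) * ee (-(θ * ((y.val / 2 : ℕ) : ZMod r))) := by
      rw [← AddChar.map_add_eq_mul]; congr 1; ring
    rw [e1]
    rcases Nat.mod_two_eq_zero_or_one x.val with hx | hx <;>
    rcases Nat.mod_two_eq_zero_or_one θ.val with ht | ht
    · rw [if_pos (by omega), if_pos (by omega), Even.neg_one_pow (Nat.even_iff.2 hx),
        Even.neg_one_pow (Nat.even_iff.2 ht)]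
      ring
    · rw [if_neg (by omega), Even.neg_one_pow (Nat.even_iff.2 hx),
        Odd.neg_one_pow (Nat.odd_iff.2 ht)]
      ring
    · rw [if_neg (by omega), Odd.neg_one_pow (Nat.odd_iff.2 hx),
        Even.neg_one_pow (Nat.even_iff.2 ht)]
      ring
    · rw [if_pos (by omega), if_pos (by omega), Odd.neg_one_pow (Nat.odd_iff.2 hx),
        Odd.neg_one_pow (Nat.odd_iff.2 ht)]
      ring
  rw [Finset.sum_congr rfl fun θ _ => key θ, ← Finset.mul_sum, Finset.sum_add_distrib,
    ← Finset.mul_sum, sum_ee, sum_ee]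
  have hx := ZMod.val_lt x
  have hy := ZMod.val_lt y
  have hr2 : 2 * (r / 2) = r := Nat.mul_div_cancel' hr.two_dvd
  have n2 : ¬ (((x.val / 2 : ℕ) : ZMod r) - ((y.val / 2 : ℕ) : ZMod r) +
          ((r / 2 : ℕ) : ZMod r) = 0) := by
    intro h
    have h' : ((x.val / 2 + r / 2 : ℕ) : ZMod r) = ((y.val / 2 : ℕ) : ZMod r) := by
      push_cast; linear_combination h
    have := congrArg ZMod.val h'
    rw [ZMod.val_natCast, ZMod.val_natCast, Nat.mod_eq_of_lt (by omega),
      Nat.mod_eq_of_lt (by omega)] at this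
    omega
  rw [if_neg n2]
  by_cases hxy : x = y
  · subst hxy
    simp [hr0]
  · rw [if_neg hxy, if_neg]
    · simp
    · intro h
      rw [sub_eq_zero] at h
      have := congrArg ZMod.val h
      rw [ZMod.val_natCast, ZMod.val_natCast, Nat.mod_eq_of_lt (by omega),
        Nat.mod_eq_of_lt (by omega)] at this
      exact hxy (ZMod.val_injective r (by omega))

open scoped Classical in
/-- Fourier transform of a twisted permutation trace -/
theorem fourier (hr : Even r) {Q : Type} [Fintype Q] [DecidableEq Q] (s : Equiv.Perm Q) (fx : Q → Prop)
    (hfx : ∀ q, fx (s q) ↔ fx q) (C : Q → ZMod r) :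
    ∑ d ∈ univ.filter (fun d : Q → ZMod r => ∀ q, d (s q) = d q + if fx q then 2 * C q else C q),
      ∏ q, (if fx q then (sgn (d q) (C q) : ℂ) else 1) =
    ∑ θ ∈ univ.filter (fun θ : Q → ZMod r => ∀ q, θ (s q) = θ q), ∏ q, ee (θ q * C q) := by
  have hr0 : (r : ℂ) ≠ 0 := by exact_mod_cast NeZero.ne r
  let K : Q → ZMod r → ZMod r → ℂ := fun q x θ => if fx q then PF x θ else ee (θ * x)
  let K' : Q → ZMod r → ZMod r → ℂ := fun q θ y => if fx q then PF' θ y else ee (-(θ * y)) / r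
  have hK : ∀ q x y, ∑ θ, K q x θ * K' q θ y = if x = y then 1 else 0 := by
    intro q x y
    by_cases h : fx q
    · simp only [K, K', if_pos h]; exact PF_inv hr x y
    · simp only [K, K', if_neg h]
      have : ∀ θ : ZMod r, ee (θ * x) * (ee (-(θ * y)) / r) = (1 / r) * ee (θ * (x - y)) := by
        intro θ
        have : ee (θ * (x - y)) = ee (θ * x) * ee (-(θ * y)) := by
          rw [← AddChar.map_add_eq_mul]; congr 1; ring
        rw [this]; ring
      rw [Finset.sum_congr rfl fun θ _ => this θ, ← Finset.mul_sum, sum_ee]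
      simp only [sub_eq_zero]
      split_ifs <;> simp [hr0]
  let Φ : Matrix (Q → ZMod r) (Q → ZMod r) ℂ := fun d θ => ∏ q, K q (d q) (θ q)
  let Φ' : Matrix (Q → ZMod r) (Q → ZMod r) ℂ := fun θ d => ∏ q, K' q (θ q) (d q)
  have hΦ : Φ * Φ' = 1 := by
    ext d d'
    rw [Matrix.mul_apply]
    have : ∀ θ : Q → ZMod r, Φ d θ * Φ' θ d' = ∏ q, K q (d q) (θ q) * K' q (θ q) (d' q) :=
      fun θ => (Finset.prod_mul_distrib).symm
    rw [Finset.sum_congr rfl fun θ _ => this θ]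
    have h2 := Finset.prod_univ_sum (fun _ : Q => (univ : Finset (ZMod r)))
      (fun q z => K q (d q) z * K' q z (d' q))
    rw [Fintype.piFinset_univ] at h2
    rw [← h2, Finset.prod_congr rfl fun q _ => hK q (d q) (d' q), Matrix.one_apply]
    by_cases hd : d = d'
    · subst hd; simp
    · rw [if_neg hd]
      obtain ⟨q, hq⟩ := Function.ne_iff.1 hd
      exact Finset.prod_eq_zero (mem_univ q) (if_neg hq)
  have hΦ2 : Φ' * Φ = 1 := mul_eq_one_comm.1 hΦ
  let sh : Q → ZMod r := fun q => if fx q then 2 * C q else C q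
  let A : Matrix (Q → ZMod r) (Q → ZMod r) ℂ := fun d d' =>
    if (fun q => d' (s q)) = d + sh then ∏ q, (if fx q then (sgn (d q) (C q) : ℂ) else 1) else 0
  let B : Matrix (Q → ZMod r) (Q → ZMod r) ℂ := fun θ θ' =>
    if (fun q => θ' (s q)) = θ then ∏ q, ee (θ q * C q) else 0
  have hAB : A * Φ = Φ * B := by
    ext d θ'
    rw [Matrix.mul_apply, Matrix.mul_apply]
    rw [Finset.sum_eq_single (fun q => (d + sh) (s⁻¹ q)), Finset.sum_eq_single (fun q => θ' (s q))]
    · have h1 : A d (fun q => (d + sh) (s⁻¹ q)) =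
          ∏ q, (if fx q then (sgn (d q) (C q) : ℂ) else 1) := by
        simp only [A]; rw [if_pos]; funext q; simp
      have h2 : B (fun q => θ' (s q)) θ' = ∏ q, ee (θ' (s q) * C q) := if_pos rfl
      rw [h1, h2]
      have h3 : Φ (fun q => (d + sh) (s⁻¹ q)) θ' = ∏ q, K q ((d + sh) q) (θ' (s q)) := by
        simp only [Φ]
        rw [← Equiv.prod_comp s]
        refine Finset.prod_congr rfl fun q _ => ?_
        have hq : s⁻¹ (s q) = q := s.symm_apply_apply q
        simp only [K, hfx, hq]
      rw [h3, ← Finset.prod_mul_distrib]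
      simp only [Φ]
      rw [← Finset.prod_mul_distrib]
      refine Finset.prod_congr rfl fun q _ => ?_
      simp only [K, Pi.add_apply, sh]
      by_cases h : fx q
      · simp only [if_pos h]; exact PF_shift hr _ _ _
      · simp only [if_neg h]
        rw [one_mul, mul_add, AddChar.map_add_eq_mul]
    · intro b _ hb
      have : B b θ' = 0 := if_neg (Ne.symm hb)
      rw [this, mul_zero]
    · simp
    · intro b _ hb
      have : A d b = 0 := if_neg (by
        intro h; apply hb; funext q; rw [← h]; simp)
      rw [this, zero_mul]
    · simp
  have htr : A.trace = B.trace := by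
    have h1 : A = Φ * B * Φ' := by rw [← hAB, Matrix.mul_assoc, hΦ, Matrix.mul_one]
    rw [h1, Matrix.trace_mul_cycle, hΦ2, Matrix.one_mul]
  have e1 : A.trace = ∑ d ∈ univ.filter (fun d : Q → ZMod r => ∀ q, d (s q) = d q + if fx q then 2 * C q else C q),
      ∏ q, (if fx q then (sgn (d q) (C q) : ℂ) else 1) := by
    rw [Finset.sum_filter]
    refine Finset.sum_congr rfl fun d _ => ?_
    simp only [A, Matrix.diag, Matrix.of_apply, funext_iff, Pi.add_apply, sh]
  have e2 : B.trace = ∑ θ ∈ univ.filter (fun θ : Q → ZMod r => ∀ q, θ (s q) = θ q), ∏ q, ee (θ q * C q) := by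
    rw [Finset.sum_filter]
    refine Finset.sum_congr rfl fun d _ => ?_
    simp only [B, Matrix.diag, Matrix.of_apply, funext_iff]
  rw [← e1, ← e2, htr]

end GM

namespace GM
variable {r : ℕ} [NeZero r]

theorem fourier_count (hr : Even r) {X : Type} [Fintype X] [DecidableEq X] (τ : Equiv.Perm X)
    (c : X → ZMod r) :
    ((univ.filter (fun d : X → ZMod r => ∀ q, d (τ q) = d q + c q)).card : ℂ) =
    ∑ θ ∈ univ.filter (fun θ : X → ZMod r => ∀ q, θ (τ q) = θ q), ∏ q, ee (θ q * c q) := by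
  classical
  have := fourier hr τ (fun _ => False) (by simp) c
  rw [← this]
  simp

theorem fourier_u (hr : Even r) {X : Type} [Fintype X] [DecidableEq X] (u σ : Equiv.Perm X)
    (hu : ∀ x, u (u x) = x) (hc : ∀ x, u (σ x) = σ (u x)) (c : X → ZMod r) :
    ∑ d ∈ univ.filter (fun d : X → ZMod r => (∀ i, d (u i) = d i) ∧
        ∀ i, d (σ i) = d i + c i + c (u i)),
      ∏ i, (if u i = i then (sgn (d i) (c i) : ℂ) else 1) =
    ∑ θ ∈ univ.filter (fun θ : X → ZMod r => (∀ i, θ (u i) = θ i) ∧ ∀ i, θ (σ i) = θ i),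
      ∏ i, ee (θ i * c i) := by
  classical
  let S : Setoid X := ⟨fun i j => i = j ∨ u i = j, by
    refine ⟨fun x => Or.inl rfl, ?_, ?_⟩
    · rintro x y (rfl | rfl)
      · exact Or.inl rfl
      · exact Or.inr (hu x)
    · rintro x y z (rfl | rfl) (rfl | rfl)
      · exact Or.inl rfl
      · exact Or.inr rfl
      · exact Or.inr rfl
      · exact Or.inl (hu x).symm⟩
  let p : X → Quotient S := Quotient.mk S
  have hp : ∀ i j, p i = p j ↔ (i = j ∨ u i = j) := fun i j => Quotient.eq (r := S)
  have hps : Function.Surjective p := Quotient.mk_surjective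
  have hpu : ∀ i, p (u i) = p i := fun i => (hp _ _).2 (Or.inr (hu i))
  let s : Equiv.Perm (Quotient S) := Quotient.congr σ (by
    intro a b
    show (a = b ∨ u a = b) ↔ (σ a = σ b ∨ u (σ a) = σ b)
    rw [hc, σ.injective.eq_iff, σ.injective.eq_iff])
  have hs : ∀ i, s (p i) = p (σ i) := fun i => rfl
  let C : Quotient S → ZMod r := fun q => ∑ i ∈ univ.filter (fun i => p i = q), c i
  let fx : Quotient S → Prop := fun q => ∃ i, p i = q ∧ u i = i
  have hfx : ∀ i, fx (p i) ↔ u i = i := by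
    intro i
    constructor
    · rintro ⟨j, hj, hj2⟩
      rcases (hp _ _).1 hj with rfl | h
      · exact hj2
      · rw [hj2] at h; subst h; exact hj2
    · intro h; exact ⟨i, rfl, h⟩
  have hfib1 : ∀ i, u i = i → univ.filter (fun j => p j = p i) = {i} := by
    intro i hi
    ext j
    simp only [mem_filter, mem_univ, true_and, mem_singleton, hp]
    constructor
    · rintro (h | h)
      · exact h
      · rw [← hu j, h, hi]
    · intro h; exact Or.inl h
  have hfib2 : ∀ i, univ.filter (fun j => p j = p i) = {i, u i} := by
    intro i
    ext j
    simp only [mem_filter, mem_univ, true_and, mem_singleton, hp, mem_insert]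
    constructor
    · rintro (h | h)
      · exact Or.inl h
      · exact Or.inr (by rw [← h, hu])
    · rintro (h | h)
      · exact Or.inl h
      · exact Or.inr (by rw [h, hu])
  have hC1 : ∀ i, u i = i → C (p i) = c i := by
    intro i hi; simp only [C]; rw [hfib1 i hi, Finset.sum_singleton]
  have hC2 : ∀ i, u i ≠ i → C (p i) = c i + c (u i) := by
    intro i hi; simp only [C]; rw [hfib2 i, Finset.sum_pair (Ne.symm hi)]
  have hsh : ∀ i, (if fx (p i) then 2 * C (p i) else C (p i)) = c i + c (u i) := by
    intro i
    by_cases h : u i = i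
    · rw [if_pos ((hfx i).2 h), hC1 i h, h]; ring
    · rw [if_neg (fun h' => h ((hfx i).1 h')), hC2 i h]
  have main := fourier hr s fx (by
    intro q
    obtain ⟨i, rfl⟩ := hps q
    rw [hs, hfx, hfx, hc, σ.injective.eq_iff]) C
  have L : ∑ d ∈ univ.filter (fun d : Quotient S → ZMod r => ∀ q, d (s q) = d q + if fx q then 2 * C q else C q),
      ∏ q, (if fx q then (sgn (d q) (C q) : ℂ) else 1) =
      ∑ d ∈ univ.filter (fun d : X → ZMod r => (∀ i, d (u i) = d i) ∧
        ∀ i, d (σ i) = d i + c i + c (u i)),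
      ∏ i, (if u i = i then (sgn (d i) (c i) : ℂ) else 1) := by
    refine Finset.sum_bij (fun D _ => D ∘ p) ?_ ?_ ?_ ?_
    · intro D hD
      simp only [mem_filter, mem_univ, true_and, Function.comp] at hD ⊢
      refine ⟨fun i => by rw [hpu], fun i => ?_⟩
      have := hD (p i)
      rw [hsh, hs] at this
      rw [this, add_assoc]
    · intro D _ D' _ h
      exact hps.injective_comp_right h
    · intro d hd
      simp only [mem_filter, mem_univ, true_and] at hd
      refine ⟨Quotient.lift d ?_, ?_, ?_⟩
      · rintro a b (rfl | rfl)
        · rfl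
        · exact (hd.1 a).symm
      · simp only [mem_filter, mem_univ, true_and]
        intro q
        obtain ⟨i, rfl⟩ := hps q
        rw [hsh, hs]
        show d (σ i) = d i + _
        rw [hd.2, add_assoc]
      · rfl
    · intro D _
      rw [← Finset.prod_fiberwise univ p]
      refine Finset.prod_congr rfl fun q _ => ?_
      obtain ⟨i, rfl⟩ := hps q
      by_cases h : u i = i
      · rw [if_pos ((hfx i).2 h), hfib1 i h, Finset.prod_singleton, if_pos h, hC1 i h]; rfl
      · rw [if_neg (fun h' => h ((hfx i).1 h')), hfib2 i, Finset.prod_pair (Ne.symm h), if_neg h,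
          if_neg (by rw [hu]; exact Ne.symm h), one_mul]
  have R : ∑ θ ∈ univ.filter (fun θ : Quotient S → ZMod r => ∀ q, θ (s q) = θ q), ∏ q, ee (θ q * C q) =
      ∑ θ ∈ univ.filter (fun θ : X → ZMod r => (∀ i, θ (u i) = θ i) ∧ ∀ i, θ (σ i) = θ i),
      ∏ i, ee (θ i * c i) := by
    refine Finset.sum_bij (fun D _ => D ∘ p) ?_ ?_ ?_ ?_
    · intro D hD
      simp only [mem_filter, mem_univ, true_and, Function.comp] at hD ⊢
      refine ⟨fun i => by rw [hpu], fun i => ?_⟩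
      have := hD (p i)
      rw [hs] at this
      rw [this]
    · intro D _ D' _ h
      exact hps.injective_comp_right h
    · intro d hd
      simp only [mem_filter, mem_univ, true_and] at hd
      refine ⟨Quotient.lift d ?_, ?_, ?_⟩
      · rintro a b (rfl | rfl)
        · rfl
        · exact (hd.1 a).symm
      · simp only [mem_filter, mem_univ, true_and]
        intro q
        obtain ⟨i, rfl⟩ := hps q
        rw [hs]
        exact hd.2 i
      · rfl
    · intro D _
      rw [← Finset.prod_fiberwise univ p]
      refine Finset.prod_congr rfl fun q _ => ?_
      obtain ⟨i, rfl⟩ := hps q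
      by_cases h : u i = i
      · rw [hfib1 i h, Finset.prod_singleton, hC1 i h]; rfl
      · rw [hfib2 i, Finset.prod_pair (Ne.symm h), hC2 i h, mul_add, AddChar.map_add_eq_mul]
        show _ = ee (D (p i) * c i) * ee (D (p (u i)) * c (u i))
        rw [hpu]
  rw [← L, ← R]
  convert main

end GM

namespace GM
section pairs
variable {n : ℕ}

/-- order sign -/
def os (a b : Fin n) : ℤ := if a < b then 1 else -1

theorem os_swap {a b : Fin n} (h : a ≠ b) : os b a = - os a b := by
  unfold os
  rcases lt_or_gt_of_ne h with h | h
  · rw [if_neg (not_lt.2 h.le), if_pos h]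
  · rw [if_pos h, if_neg (not_lt.2 h.le)]; rfl

theorem os_sq (a b : Fin n) : os a b * os a b = 1 := by
  unfold os; split_ifs <;> rfl

/-- the pair sign -/
def psign (σ u : Equiv.Perm (Fin n)) : ℤ := (-1) ^ ((invPairs σ ∩ pairSet u).card)

/-- transversals of moved points -/
def IsTr (u : Equiv.Perm (Fin n)) (A : Finset (Fin n)) : Prop :=
  (∀ x ∈ A, u x ≠ x) ∧ ∀ x, u x ≠ x → (x ∈ A ↔ u x ∉ A)

theorem prod_tr {u : Equiv.Perm (Fin n)} (hu : ∀ x, u (u x) = x) {A B : Finset (Fin n)}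
    (hA : IsTr u A) (hB : IsTr u B) (g : Fin n → ℤ) (hg : ∀ x, u x ≠ x → g (u x) = g x) :
    ∏ x ∈ A, g x = ∏ x ∈ B, g x := by
  rw [← Finset.prod_inter_mul_prod_sdiff A B, ← Finset.prod_inter_mul_prod_sdiff B A, Finset.inter_comm]
  congr 1
  refine Finset.prod_bij (fun x _ => u x) ?_ ?_ ?_ ?_
  · intro x hx
    rw [mem_sdiff] at hx ⊢
    have hm := hA.1 x hx.1
    have h1 := hA.2 x hm
    have h2 := hB.2 x hm
    tauto
  · intro x _ y _ h; exact u.injective h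
  · intro y hy
    rw [mem_sdiff] at hy
    refine ⟨u y, ?_, hu y⟩
    have hm := hB.1 y hy.1
    have h1 := hA.2 y hm
    have h2 := hB.2 y hm
    rw [mem_sdiff]
    tauto
  · intro x hx
    rw [mem_sdiff] at hx
    exact (hg x (hA.1 x hx.1)).symm

theorem isTr_lt {u : Equiv.Perm (Fin n)} (hu : ∀ x, u (u x) = x) :
    IsTr u (univ.filter fun x => x < u x) := by
  constructor
  · intro x hx
    simp at hx
    exact ne_of_gt hx
  · intro x hx
    simp [hu]
    constructor
    · intro h; exact h.le
    · intro h; exact lt_of_le_of_ne h (Ne.symm hx)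

theorem psign_eq {u : Equiv.Perm (Fin n)} (hu : ∀ x, u (u x) = x) (σ : Equiv.Perm (Fin n))
    {A : Finset (Fin n)} (hA : IsTr u A) :
    psign σ u = ∏ x ∈ A, os x (u x) * os (σ x) (σ (u x)) := by
  rw [prod_tr hu hA (isTr_lt hu)]
  · unfold psign
    rw [← Finset.prod_const]
    have : ∀ x ∈ univ.filter (fun x => x < u x), os x (u x) * os (σ x) (σ (u x)) =
        if σ (u x) < σ x then -1 else 1 := by
      intro x hx
      simp at hx
      unfold os
      rw [if_pos hx, one_mul]
      have : σ x ≠ σ (u x) := fun h => hx.ne (σ.injective h)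
      rcases lt_or_gt_of_ne this with h | h
      · rw [if_neg (not_lt.2 h.le), if_pos h]
      · rw [if_pos h, if_neg (not_lt.2 h.le)]
    rw [Finset.prod_congr rfl this, ← Finset.prod_filter]
    refine Finset.prod_bij (fun p _ => p.1) ?_ ?_ ?_ ?_
    · intro p hp
      simp [invPairs, pairSet] at hp ⊢
      obtain ⟨⟨h1, h2⟩, h3, h4, h5⟩ := hp
      rw [h4]; exact ⟨h1, h2⟩
    · intro p hp q hq h
      simp [invPairs, pairSet] at hp hq
      refine Prod.ext h ?_
      rw [← hp.2.2.1, ← hq.2.2.1, h]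
    · intro x hx
      simp at hx
      refine ⟨(x, u x), ?_, rfl⟩
      simp [invPairs, pairSet, hu, hx]
    · intros; rfl
  · intro x hx
    rw [hu, os_swap (Ne.symm hx), os_swap (fun h => hx (σ.injective h).symm)]
    ring

theorem psign_mul {u : Equiv.Perm (Fin n)} (hu : ∀ x, u (u x) = x) (σ₁ σ₂ : Equiv.Perm (Fin n)) :
    psign (σ₁ * σ₂) u = psign σ₁ (σ₂ * u * σ₂⁻¹) * psign σ₂ u := by
  have hA := isTr_lt hu
  set A := univ.filter (fun x => x < u x)
  have hv : ∀ x, (σ₂ * u * σ₂⁻¹) ((σ₂ * u * σ₂⁻¹) x) = x := by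
    intro x; simp [hu]
  have hA' : IsTr (σ₂ * u * σ₂⁻¹) (A.map σ₂.toEmbedding) := by
    constructor
    · intro x hx
      rw [mem_map] at hx
      obtain ⟨y, hy, rfl⟩ := hx
      simpa using hA.1 y hy
    · intro x hx
      obtain ⟨y, rfl⟩ := σ₂.surjective x
      have hy : u y ≠ y := by intro h; apply hx; simp [h]
      have := hA.2 y hy
      simpa using this
  rw [psign_eq hu _ hA, psign_eq hu _ hA, psign_eq hv _ hA', Finset.prod_map, ← Finset.prod_mul_distrib]
  refine Finset.prod_congr rfl fun x _ => ?_
  simp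
  have := os_sq (σ₂ x) (σ₂ (u x))
  linear_combination (- os x (u x) * os (σ₁ (σ₂ x)) (σ₁ (σ₂ (u x)))) * this

theorem psign_one (u : Equiv.Perm (Fin n)) : psign 1 u = 1 := by
  unfold psign
  have : invPairs (1 : Equiv.Perm (Fin n)) = ∅ := by
    unfold invPairs
    refine Finset.filter_eq_empty_iff.2 fun p _ h => ?_
    exact absurd h.1 (not_lt.2 (le_of_lt h.2))
  simp [this]

/-- the commuting case -/
theorem psign_comm {u σ : Equiv.Perm (Fin n)} (hu : ∀ x, u (u x) = x) (hc : ∀ x, u (σ x) = σ (u x))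
    {A : Finset (Fin n)} (hA : IsTr u A) :
    psign σ u = ∏ x ∈ A, os x (u x) * os (σ x) (u (σ x)) := by
  rw [psign_eq hu σ hA]; simp only [hc]

end pairs
end GM

namespace GM
section cyc
variable {n : ℕ} (σ : Equiv.Perm (Fin n))

/-- cycle length -/
noncomputable def ell (x : Fin n) : ℕ := Function.minimalPeriod σ x

theorem zp (x : Fin n) (k : ℤ) : (σ ^ k) x = x ↔ (ell σ x : ℤ) ∣ k :=
  MulAction.zpow_smul_eq_iff_minimalPeriod_dvd (a := σ) (b := x) (n := k)

theorem ell_zpow (x : Fin n) (j : ℤ) : ell σ ((σ ^ j) x) = ell σ x := by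
  have : ∀ k : ℤ, (ell σ ((σ ^ j) x) : ℤ) ∣ k ↔ (ell σ x : ℤ) ∣ k := by
    intro k
    rw [← zp, ← zp, ← Equiv.Perm.mul_apply, ← zpow_add, add_comm, zpow_add, Equiv.Perm.mul_apply]
    exact (σ ^ j).injective.eq_iff
  apply Nat.dvd_antisymm
  · exact Int.natCast_dvd_natCast.1 ((this _).2 dvd_rfl)
  · exact Int.natCast_dvd_natCast.1 ((this _).1 dvd_rfl)

theorem ell_same {x y : Fin n} (h : σ.SameCycle x y) : ell σ y = ell σ x := by
  obtain ⟨j, rfl⟩ := h; exact ell_zpow σ x j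

theorem ell_pos (x : Fin n) : 0 < ell σ x := by
  have h : (σ ^ ((orderOf σ : ℕ) : ℤ)) x = x := by rw [zpow_natCast, pow_orderOf_eq_one]; rfl
  rw [zp] at h
  have := Int.natCast_dvd_natCast.1 h
  exact Nat.pos_of_dvd_of_pos this (orderOf_pos σ)

theorem cyc_apply (x y : Fin n) (k : ℕ) :
    (σ.cycleOf x ^ k) y = if σ.SameCycle x y then (σ ^ k) y else y := by
  induction k generalizing y with
  | zero => simp
  | succ k ih =>
    rw [pow_succ, Equiv.Perm.mul_apply, Equiv.Perm.cycleOf_apply]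
    by_cases h : σ.SameCycle x y
    · rw [if_pos h, ih, if_pos (Equiv.Perm.sameCycle_apply_right.2 h), if_pos h, pow_succ]; rfl
    · rw [if_neg h, ih, if_neg h, if_neg h]

/-- half turn on the cycle of x -/
noncomputable def hf (x : Fin n) : Equiv.Perm (Fin n) := σ.cycleOf x ^ (ell σ x / 2)

theorem hf_in {x y : Fin n} (h : σ.SameCycle x y) : hf σ x y = (σ ^ (ell σ x / 2)) y := by
  unfold hf; rw [cyc_apply, if_pos h]

theorem hf_out {x y : Fin n} (h : ¬ σ.SameCycle x y) : hf σ x y = y := by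
  unfold hf; rw [cyc_apply, if_neg h]

theorem hf_same {x y : Fin n} (h : σ.SameCycle x y) : σ.SameCycle x (hf σ x y) := by
  rw [hf_in σ h]
  exact h.trans ⟨(ell σ x / 2 : ℕ), by rw [zpow_natCast]⟩

theorem hf_hf {x : Fin n} (he : Even (ell σ x)) (y : Fin n) : hf σ x (hf σ x y) = y := by
  by_cases h : σ.SameCycle x y
  · rw [hf_in σ (hf_same σ h), hf_in σ h, ← Equiv.Perm.mul_apply, ← pow_add]
    have : ell σ x / 2 + ell σ x / 2 = ell σ x := by obtain ⟨k, hk⟩ := he; omega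
    rw [this, ← zpow_natCast, zp, ell_same σ h]
  · rw [hf_out σ h, hf_out σ h]

theorem hf_ne {x : Fin n} (he : Even (ell σ x)) : hf σ x x ≠ x := by
  rw [hf_in σ (Equiv.Perm.SameCycle.refl σ x), ← zpow_natCast, Ne, zp]
  intro h
  have h := Int.natCast_dvd_natCast.1 h
  have h0 := ell_pos σ x
  obtain ⟨k, hk⟩ := he
  have := Nat.le_of_dvd (by omega) h
  omega

theorem comm_pow {u : Equiv.Perm (Fin n)} (hc : ∀ x, u (σ x) = σ (u x)) (k : ℕ) (x : Fin n) :
    u ((σ ^ k) x) = (σ ^ k) (u x) := by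
  have : Commute u σ := Equiv.ext hc
  exact Equiv.ext_iff.1 (this.pow_right k) x

theorem comm_zpow {u : Equiv.Perm (Fin n)} (hc : ∀ x, u (σ x) = σ (u x)) (k : ℤ) (x : Fin n) :
    u ((σ ^ k) x) = (σ ^ k) (u x) := by
  have : Commute u σ := Equiv.ext hc
  exact Equiv.ext_iff.1 (this.zpow_right k) x

theorem same_map {u : Equiv.Perm (Fin n)} (hc : ∀ x, u (σ x) = σ (u x)) {x y : Fin n}
    (h : σ.SameCycle x y) : σ.SameCycle (u x) (u y) := by
  obtain ⟨j, rfl⟩ := h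
  exact ⟨j, (comm_zpow σ hc j x).symm⟩

theorem hf_comm_σ (x y : Fin n) : hf σ x (σ y) = σ (hf σ x y) := by
  by_cases h : σ.SameCycle x y
  · rw [hf_in σ (Equiv.Perm.sameCycle_apply_right.2 h), hf_in σ h, ← Equiv.Perm.mul_apply,
      ← Equiv.Perm.mul_apply, pow_mul_comm']
  · rw [hf_out σ h, hf_out σ (fun h' => h (Equiv.Perm.sameCycle_apply_right.1 h'))]

theorem hf_comm_u {u : Equiv.Perm (Fin n)} (hc : ∀ x, u (σ x) = σ (u x)) {x : Fin n}
    (hx : σ.SameCycle x (u x)) (hu : ∀ x, u (u x) = x) (y : Fin n) :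
    hf σ x (u y) = u (hf σ x y) := by
  have key : ∀ y, σ.SameCycle x y → σ.SameCycle x (u y) := fun y h => hx.trans (same_map σ hc h)
  by_cases h : σ.SameCycle x y
  · rw [hf_in σ (key y h), hf_in σ h, comm_pow σ hc]
  · rw [hf_out σ h, hf_out σ (fun h' => h (by have := key _ h'; rwa [hu] at this))]

theorem tog {u : Equiv.Perm (Fin n)} (hc : ∀ x, u (σ x) = σ (u x)) (hu : ∀ x, u (u x) = x)
    {x : Fin n} (hx : u x = x) (he : Even (ell σ x)) :
    psign σ (u * hf σ x) = - psign σ u := by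
  have hr := Equiv.Perm.SameCycle.refl σ x
  have hxx : σ.SameCycle x (u x) := by rw [hx]
  have huK : ∀ y, σ.SameCycle x y → u y = y := by
    rintro y ⟨j, rfl⟩; rw [comm_zpow σ hc, hx]
  have hv : ∀ y, (u * hf σ x) ((u * hf σ x) y) = y := by
    intro y; simp only [Equiv.Perm.mul_apply]
    rw [hf_comm_u σ hc hxx hu, hu, hf_hf σ he]
  have hvc : ∀ y, (u * hf σ x) (σ y) = σ ((u * hf σ x) y) := by
    intro y; simp only [Equiv.Perm.mul_apply]
    rw [hf_comm_σ, hc]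
  have hvK : ∀ y, σ.SameCycle x y → (u * hf σ x) y = (σ ^ (ell σ x / 2)) y := by
    intro y hy; rw [Equiv.Perm.mul_apply, huK _ (hf_same σ hy), hf_in σ hy]
  have hvO : ∀ y, ¬ σ.SameCycle x y → (u * hf σ x) y = u y := by
    intro y hy; rw [Equiv.Perm.mul_apply, hf_out σ hy]
  have huO : ∀ y, ¬ σ.SameCycle x y → ¬ σ.SameCycle x (u y) := by
    intro y hy h; apply hy; have := huK _ h; rw [hu] at this; rwa [← this] at h
  have hA := isTr_lt hu
  set A := univ.filter (fun y => y < u y) with hAdef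
  have hAK : ∀ y ∈ A, ¬ σ.SameCycle x y := by
    intro y hy h; exact hA.1 y hy (huK y h)
  obtain ⟨m, hm⟩ := he
  have hm2 : ell σ x / 2 = m := by omega
  have hm0 : 0 < m := by have := ell_pos σ x; omega
  rw [hm2] at hvK
  have hinj : ∀ i j : ℕ, i < 2 * m → j < 2 * m → (σ ^ i) x = (σ ^ j) x → i = j := by
    intro i j hi hj h
    have : (σ ^ ((i : ℤ) - j)) x = x := by
      rw [sub_eq_neg_add, zpow_add, Equiv.Perm.mul_apply, zpow_natCast, h, zpow_neg, zpow_natCast]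
      simp
    rw [zp, hm] at this
    obtain ⟨t, ht⟩ := this
    push_cast at ht
    have h1 : t < 1 := by by_contra hh; push Not at hh; nlinarith
    have h2 : -1 < t := by by_contra hh; push Not at hh; nlinarith
    have : t = 0 := by omega
    subst this; omega
  have hsK : ∀ i : ℕ, σ.SameCycle x ((σ ^ i) x) := fun i => ⟨i, by rw [zpow_natCast]⟩
  have hper : ∀ i : ℕ, (σ ^ (2 * m + i)) x = (σ ^ i) x := by
    intro i
    rw [add_comm, pow_add, Equiv.Perm.mul_apply]
    congr 1
    rw [← zpow_natCast, zp, hm]; exact ⟨1, by push_cast; ring⟩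
  have hrep : ∀ y, σ.SameCycle x y → ∃ i < 2 * m, (σ ^ i) x = y := by
    rintro y ⟨j, rfl⟩
    refine ⟨(j % (2 * m : ℕ)).toNat, ?_, ?_⟩
    · have h1 := Int.emod_nonneg j (b := (2 * m : ℕ)) (by omega)
      have h2 := Int.emod_lt_of_pos j (b := (2 * m : ℕ)) (by omega)
      omega
    · have h1 := Int.emod_nonneg j (b := (2 * m : ℕ)) (by omega)
      rw [← zpow_natCast, Int.toNat_of_nonneg h1]
      conv_rhs => rw [← Int.emod_add_mul_ediv j (2 * m : ℕ), zpow_add, Equiv.Perm.mul_apply]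
      congr 1
      symm
      rw [zp, hm]
      exact ⟨j / (2 * m : ℕ), by push_cast; ring⟩
  set T := (range m).image (fun i => (σ ^ i) x) with hT
  have hTm : ∀ i < 2 * m, ((σ ^ i) x ∈ T ↔ i < m) := by
    intro i hi
    rw [hT, mem_image]
    constructor
    · rintro ⟨j, hj, h⟩
      rw [mem_range] at hj
      have := hinj j i (by omega) hi h
      omega
    · intro h; exact ⟨i, mem_range.2 h, rfl⟩
  have hTK : ∀ y ∈ T, σ.SameCycle x y := by
    intro y hy; rw [hT, mem_image] at hy
    obtain ⟨i, _, rfl⟩ := hy; exact hsK i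
  have hdisj : Disjoint A T := by
    rw [Finset.disjoint_left]; intro y h1 h2; exact hAK y h1 (hTK y h2)
  have hA' : IsTr (u * hf σ x) (A ∪ T) := by
    constructor
    · intro y hy
      rw [mem_union] at hy
      rcases hy with hy | hy
      · rw [hvO y (hAK y hy)]; exact hA.1 y hy
      · rw [hvK y (hTK y hy)]
        rw [hT, mem_image] at hy
        obtain ⟨i, hi, rfl⟩ := hy
        rw [mem_range] at hi
        rw [← Equiv.Perm.mul_apply, ← pow_add]
        intro h
        have := hinj _ _ (by omega) (by omega) h
        omega
    · intro y hy
      by_cases h : σ.SameCycle x y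
      · have e1 : ∀ z, σ.SameCycle x z → (z ∈ A ∪ T ↔ z ∈ T) := by
          intro z hz; rw [mem_union]
          exact ⟨fun h => h.resolve_left (fun h' => hAK z h' hz), Or.inr⟩
        have hvs : σ.SameCycle x ((u * hf σ x) y) := by
          rw [hvK y h]; exact h.trans ⟨m, by rw [zpow_natCast]⟩
        rw [e1 y h, e1 _ hvs, hvK y h]
        obtain ⟨i, hi, rfl⟩ := hrep y h
        rw [← Equiv.Perm.mul_apply, ← pow_add, hTm i hi]
        by_cases him : i < m
        · rw [hTm _ (by omega)]; omega
        · have : m + i = 2 * m + (i - m) := by omega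
          rw [this, hper, hTm _ (by omega)]
          omega
      · have e1 : ∀ z, ¬ σ.SameCycle x z → (z ∈ A ∪ T ↔ z ∈ A) := by
          intro z hz; rw [mem_union]
          exact ⟨fun h => h.resolve_right (fun h' => hz (hTK z h')), Or.inl⟩
        rw [hvO y h] at hy ⊢
        rw [e1 y h, e1 _ (huO y h)]
        exact hA.2 y hy
  rw [psign_comm hv hvc hA', psign_comm hu hc hA, Finset.prod_union hdisj]
  have e1 : ∏ y ∈ A, os y ((u * hf σ x) y) * os (σ y) ((u * hf σ x) (σ y)) =
      ∏ y ∈ A, os y (u y) * os (σ y) (u (σ y)) := by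
    refine Finset.prod_congr rfl fun y hy => ?_
    rw [hvc, hvO y (hAK y hy), hc]
  have e2 : ∏ y ∈ T, os y ((u * hf σ x) y) * os (σ y) ((u * hf σ x) (σ y)) = -1 := by
    rw [hT, Finset.prod_image]
    · have tel : ∀ (v : Equiv.Perm (Fin n)) (k : ℕ), ∏ i ∈ range k, os ((σ ^ i) x) (v ((σ ^ i) x)) *
          os (σ ((σ ^ i) x)) (v (σ ((σ ^ i) x))) =
          os x (v x) * os ((σ ^ k) x) (v ((σ ^ k) x)) := by
        intro v k
        induction k with
        | zero => simp [os_sq]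
        | succ k ih =>
          rw [Finset.prod_range_succ, ih, pow_succ', Equiv.Perm.mul_apply]
          have := os_sq ((σ ^ k) x) (v ((σ ^ k) x))
          linear_combination (os x (v x) * os (σ ((σ ^ k) x)) (v (σ ((σ ^ k) x)))) * this
      have hne : x ≠ (u * hf σ x) x := by
        rw [hvK x hr]; intro h
        have := hinj 0 m (by omega) (by omega) (by simpa using h)
        omega
      rw [tel _ m, ← hvK x hr, hv, os_swap hne]
      have := os_sq x ((u * hf σ x) x)
      linear_combination -this
    · intro i hi j hj h
      simp only [coe_range, Set.mem_Iio] at hi hj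
      exact hinj i j (by omega) (by omega) h
  rw [e1, e2]; ring

theorem tog' {u : Equiv.Perm (Fin n)} (hc : ∀ x, u (σ x) = σ (u x)) (hu : ∀ x, u (u x) = x)
    {x : Fin n} (hx : σ.SameCycle x (u x)) (he : Even (ell σ x)) :
    psign σ (u * hf σ x) = - psign σ u := by
  by_cases h : u x = x
  · exact tog σ hc hu h he
  have hux : u x = hf σ x x := by
    obtain ⟨k, hk⟩ := hx
    have h2 : (σ ^ (k + k)) x = x := by
      rw [zpow_add, Equiv.Perm.mul_apply, hk, ← comm_zpow σ hc, hk, hu]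
    rw [hf_in σ (Equiv.Perm.SameCycle.refl σ x), ← hk, ← zpow_natCast]
    have h3 : ¬ (ell σ x : ℤ) ∣ k := by
      rw [← zp, hk]; exact h
    rw [zp] at h2
    obtain ⟨m, hm⟩ := he
    have hm2 : ell σ x / 2 = m := by omega
    rw [hm2]
    have h4 : (ell σ x : ℤ) ∣ k - m := by
      rw [hm] at h2 h3 ⊢
      obtain ⟨t, ht⟩ := h2
      push_cast at ht h3 ⊢
      have hk2 : k = m * t := by linarith
      rcases Int.even_or_odd' t with ⟨s, hs | hs⟩
      · exact absurd ⟨s, by rw [hk2, hs]; ring⟩ h3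
      · exact ⟨s, by rw [hk2, hs]; ring⟩
    rw [← zp] at h4
    have : k = m + (k - m) := by ring
    rw [this, zpow_add, Equiv.Perm.mul_apply, h4]
  have hv : ∀ y, (u * hf σ x) ((u * hf σ x) y) = y := by
    intro y; simp only [Equiv.Perm.mul_apply]
    rw [hf_comm_u σ hc hx hu, hu, hf_hf σ he]
  have hvc : ∀ y, (u * hf σ x) (σ y) = σ ((u * hf σ x) y) := by
    intro y; simp only [Equiv.Perm.mul_apply]
    rw [hf_comm_σ, hc]
  have := tog σ hvc hv (x := x) (by rw [Equiv.Perm.mul_apply, ← hux, hu]) he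
  have e : u * hf σ x * hf σ x = u := by
    ext y; simp [hf_hf σ he]
  rw [e] at this
  rw [this, neg_neg]

end cyc
end GM

namespace GM
section roots
variable {n : ℕ} (σ : Equiv.Perm (Fin n))

/-- cycle key -/
noncomputable def cm (x : Fin n) : Fin n :=
  Quotient.out (Quotient.mk (Equiv.Perm.SameCycle.setoid σ) x)

theorem cm_eq {x y : Fin n} : cm σ x = cm σ y ↔ σ.SameCycle x y := by
  unfold cm
  rw [Quotient.out_inj, Quotient.eq]; rfl

theorem cm_σ (x : Fin n) : cm σ (σ x) = cm σ x := by
  rw [cm_eq, Equiv.Perm.sameCycle_apply_left]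

theorem cm_pow (x : Fin n) (k : ℕ) : cm σ ((σ ^ k) x) = cm σ x := by
  rw [cm_eq, Equiv.Perm.sameCycle_pow_left]

theorem cm_map {u : Equiv.Perm (Fin n)} (hc : ∀ x, u (σ x) = σ (u x)) {x y : Fin n}
    (h : cm σ x = cm σ y) : cm σ (u x) = cm σ (u y) := by
  rw [cm_eq] at h ⊢; exact same_map σ hc h

/-- good involutions -/
def Good (u : Equiv.Perm (Fin n)) : Prop := ∀ x, σ.SameCycle x (u x) → ¬ Even (ell σ x)

theorem good_fix {u : Equiv.Perm (Fin n)} (hc : ∀ x, u (σ x) = σ (u x)) (hu : ∀ x, u (u x) = x)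
    (hg : Good σ u) {x : Fin n} (h : σ.SameCycle x (u x)) : u x = x := by
  have ho := hg x h
  obtain ⟨k, hk⟩ := h
  have h2 : (σ ^ (k + k)) x = x := by
    rw [zpow_add, Equiv.Perm.mul_apply, hk, ← comm_zpow σ hc, hk, hu]
  rw [← hk]
  rw [zp] at h2 ⊢
  rw [Nat.not_even_iff_odd] at ho
  have hcop : IsCoprime (ell σ x : ℤ) 2 := by
    rw [Int.isCoprime_iff_gcd_eq_one]
    exact (Nat.coprime_two_right.2 ho)
  rw [← two_mul] at h2
  exact hcop.dvd_of_dvd_mul_left h2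

theorem psign_good {u : Equiv.Perm (Fin n)} (hc : ∀ x, u (σ x) = σ (u x)) (hu : ∀ x, u (u x) = x)
    (hg : Good σ u) : psign σ u = 1 := by
  have hA : IsTr u (univ.filter fun x => cm σ x < cm σ (u x)) := by
    constructor
    · intro x hx h
      simp [h] at hx
    · intro x hx
      have : cm σ x ≠ cm σ (u x) := by
        rw [Ne, cm_eq]; intro h; exact hx (good_fix σ hc hu hg h)
      simp [hu]
      exact ⟨le_of_lt, fun h => lt_of_le_of_ne h this⟩
  rw [psign_comm hu hc hA, Finset.prod_mul_distrib]
  have : ∏ x ∈ univ.filter (fun x => cm σ x < cm σ (u x)), os (σ x) (u (σ x)) =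
      ∏ x ∈ univ.filter (fun x => cm σ x < cm σ (u x)), os x (u x) := by
    refine Finset.prod_equiv σ ?_ (fun _ _ => rfl)
    intro x
    simp [hc, cm_σ]
  rw [this, ← Finset.prod_mul_distrib]
  exact Finset.prod_eq_one fun x _ => os_sq _ _

/-- root from involution -/
noncomputable def rt (u : Equiv.Perm (Fin n)) (x : Fin n) : Fin n :=
  if cm σ x < cm σ (u x) then u x else if cm σ (u x) < cm σ x then σ (u x)
  else (σ ^ ((ell σ x + 1) / 2)) x

theorem rt1 {u : Equiv.Perm (Fin n)} {x : Fin n} (h : cm σ x < cm σ (u x)) : rt σ u x = u x := by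
  unfold rt; rw [if_pos h]
theorem rt2 {u : Equiv.Perm (Fin n)} {x : Fin n} (h : cm σ (u x) < cm σ x) : rt σ u x = σ (u x) := by
  unfold rt; rw [if_neg (not_lt.2 h.le), if_pos h]
theorem rt3 {u : Equiv.Perm (Fin n)} {x : Fin n} (h : cm σ (u x) = cm σ x) :
    rt σ u x = (σ ^ ((ell σ x + 1) / 2)) x := by
  unfold rt; rw [if_neg (by rw [h]; exact lt_irrefl _), if_neg (by rw [h]; exact lt_irrefl _)]

theorem rt_rt {u : Equiv.Perm (Fin n)} (hc : ∀ x, u (σ x) = σ (u x)) (hu : ∀ x, u (u x) = x)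
    (hg : Good σ u) (x : Fin n) : rt σ u (rt σ u x) = σ x := by
  rcases lt_trichotomy (cm σ x) (cm σ (u x)) with h | h | h
  · rw [rt1 σ h, rt2 σ (by rwa [hu]), hu]
  · have hf := good_fix σ hc hu hg ((cm_eq σ).1 h)
    have ho := hg x ((cm_eq σ).1 h)
    rw [rt3 σ h.symm, rt3 σ (by rw [comm_pow σ hc, hf]), ell_same σ (y := (σ ^ ((ell σ x + 1) / 2)) x)
      (Equiv.Perm.sameCycle_pow_right.2 (Equiv.Perm.SameCycle.refl σ x)), ← zpow_natCast,
      ← Equiv.Perm.mul_apply, ← zpow_add]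
    rw [Nat.not_even_iff_odd] at ho
    have : (((ell σ x + 1) / 2 : ℕ) : ℤ) + ((ell σ x + 1) / 2 : ℕ) = 1 + ell σ x := by
      obtain ⟨k, hk⟩ := ho; omega
    rw [this, zpow_add, Equiv.Perm.mul_apply, (zp σ x _).2 dvd_rfl, zpow_one]
  · rw [rt2 σ h, rt1 σ (by rw [hc, hu, cm_σ, cm_σ]; exact h), hc, hu]

theorem rt_bij {u : Equiv.Perm (Fin n)} (hc : ∀ x, u (σ x) = σ (u x)) (hu : ∀ x, u (u x) = x)
    (hg : Good σ u) : Function.Bijective (rt σ u) := by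
  have : rt σ u ∘ rt σ u = σ := funext (rt_rt σ hc hu hg)
  constructor
  · apply Function.Injective.of_comp (f := rt σ u); rw [this]; exact σ.injective
  · apply Function.Surjective.of_comp (g := rt σ u); rw [this]; exact σ.surjective

/-- involution from root -/
noncomputable def iv (τ : Equiv.Perm (Fin n)) (x : Fin n) : Fin n :=
  if cm σ x < cm σ (τ x) then τ x else if cm σ (τ x) < cm σ x then τ⁻¹ x else x

theorem iv1 {u : Equiv.Perm (Fin n)} {x : Fin n} (h : cm σ x < cm σ (u x)) : iv σ u x = u x := by
  unfold iv; rw [if_pos h]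
theorem iv2 {u : Equiv.Perm (Fin n)} {x : Fin n} (h : cm σ (u x) < cm σ x) : iv σ u x = u⁻¹ x := by
  unfold iv; rw [if_neg (not_lt.2 h.le), if_pos h]
theorem iv3 {u : Equiv.Perm (Fin n)} {x : Fin n} (h : cm σ (u x) = cm σ x) :
    iv σ u x = x := by
  unfold iv; rw [if_neg (by rw [h]; exact lt_irrefl _), if_neg (by rw [h]; exact lt_irrefl _)]

section
variable {σ} {τ : Equiv.Perm (Fin n)} (hτ : ∀ x, τ (τ x) = σ x)
include hτ

theorem τcomm (x : Fin n) : τ (σ x) = σ (τ x) := by rw [← hτ, hτ]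

theorem τinv (x : Fin n) : σ (τ⁻¹ x) = τ x := by rw [← hτ]; simp

theorem cm_τinv (x : Fin n) : cm σ (τ⁻¹ x) = cm σ (τ x) := by
  rw [← τinv hτ, cm_σ]

theorem iv_iv (x : Fin n) : iv σ τ (iv σ τ x) = x := by
  rcases lt_trichotomy (cm σ x) (cm σ (τ x)) with h | h | h
  · rw [iv1 σ h, iv2 σ (by rw [hτ, cm_σ]; exact h)]; simp
  · rw [iv3 σ h.symm, iv3 σ h.symm]
  · rw [iv2 σ h, iv1 σ (by rw [cm_τinv hτ]; simpa using h)]; simp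

theorem iv_comm (x : Fin n) : iv σ τ (σ x) = σ (iv σ τ x) := by
  rcases lt_trichotomy (cm σ x) (cm σ (τ x)) with h | h | h
  · rw [iv1 σ h, iv1 σ (by rw [τcomm hτ, cm_σ, cm_σ]; exact h), τcomm hτ]
  · rw [iv3 σ h.symm, iv3 σ (by rw [τcomm hτ, cm_σ, cm_σ]; exact h.symm)]
  · rw [iv2 σ h, iv2 σ (by rw [τcomm hτ, cm_σ, cm_σ]; exact h), τinv hτ, ← hτ]; simp

theorem root_odd {x : Fin n} (h : cm σ x = cm σ (τ x)) :
    ¬ Even (ell σ x) ∧ τ x = (σ ^ ((ell σ x + 1) / 2)) x := by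
  rw [cm_eq] at h
  obtain ⟨k, hk⟩ := h
  have h1 : (σ ^ (k + k)) x = σ x := by
    rw [zpow_add, Equiv.Perm.mul_apply, hk, ← comm_zpow σ (τcomm hτ), hk, hτ]
  have h2 : (σ ^ (2 * k - 1)) x = x := by
    rw [show 2 * k - 1 = -1 + (k + k) by ring, zpow_add, Equiv.Perm.mul_apply, h1]; simp
  rw [zp] at h2
  have ho : ¬ Even (ell σ x) := by
    rintro ⟨m, hm⟩
    rw [hm] at h2
    obtain ⟨t, ht⟩ := h2
    push_cast at ht
    have : 2 * (k - m * t) = 1 := by linarith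
    omega
  refine ⟨ho, ?_⟩
  rw [Nat.not_even_iff_odd] at ho
  have hcop : IsCoprime (ell σ x : ℤ) 2 := by
    rw [Int.isCoprime_iff_gcd_eq_one]
    exact (Nat.coprime_two_right.2 ho)
  have h3 : (ell σ x : ℤ) ∣ k - ((ell σ x + 1) / 2 : ℕ) := by
    apply hcop.dvd_of_dvd_mul_left
    have : 2 * (k - ((ell σ x + 1) / 2 : ℕ)) = (2 * k - 1) - ell σ x := by
      obtain ⟨m, hm⟩ := ho; omega
    rw [this]
    exact dvd_sub h2 dvd_rfl
  rw [← zp] at h3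
  rw [← hk, ← zpow_natCast]
  conv_lhs => rw [show k = ((ell σ x + 1) / 2 : ℕ) + (k - ((ell σ x + 1) / 2 : ℕ)) by ring, zpow_add,
    Equiv.Perm.mul_apply, h3]

theorem cm_iv_ne {x : Fin n} (h : cm σ x ≠ cm σ (τ x)) : cm σ (iv σ τ x) = cm σ (τ x) := by
  rcases lt_or_gt_of_ne h with h | h
  · rw [iv1 σ h]
  · rw [iv2 σ h, cm_τinv hτ]

theorem iv_odd (x : Fin n) (h : σ.SameCycle x (iv σ τ x)) : ¬ Even (ell σ x) := by
  by_cases h' : cm σ x = cm σ (τ x)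
  · exact (root_odd hτ h').1
  · rw [← cm_eq, cm_iv_ne hτ h'] at h; exact absurd h h'

end

theorem root_count {α : Type} [DecidableEq α] (θ : Fin n → α) (hθ : ∀ x, θ (σ x) = θ x) :
    ∑ u ∈ univ.filter (fun u : Equiv.Perm (Fin n) => (∀ x, u (u x) = x) ∧ (∀ x, u (σ x) = σ (u x)) ∧
      ∀ x, θ (u x) = θ x), psign σ u =
    ((univ.filter (fun τ : Equiv.Perm (Fin n) => (∀ x, τ (τ x) = σ x) ∧ ∀ x, θ (τ x) = θ x)).card : ℤ) := by
  classical
  have hθp : ∀ (k : ℕ) x, θ ((σ ^ k) x) = θ x := by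
    intro k; induction k with
    | zero => intro x; rfl
    | succ k ih => intro x; rw [pow_succ, Equiv.Perm.mul_apply, ih, hθ]
  set U := univ.filter (fun u : Equiv.Perm (Fin n) => (∀ x, u (u x) = x) ∧ (∀ x, u (σ x) = σ (u x)) ∧
      ∀ x, θ (u x) = θ x) with hU
  have memU : ∀ u, u ∈ U ↔ (∀ x, u (u x) = x) ∧ (∀ x, u (σ x) = σ (u x)) ∧ ∀ x, θ (u x) = θ x := by
    intro u; rw [hU]; simp
  rw [← Finset.sum_filter_add_sum_filter_not U (Good σ)]
  have hbad : ∑ u ∈ U.filter (fun u => ¬ Good σ u), psign σ u = 0 := by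
    let S : Equiv.Perm (Fin n) → Finset (Fin n) := fun u =>
      univ.filter fun x => σ.SameCycle x (u x) ∧ Even (ell σ x)
    have hS : ∀ u, ¬ Good σ u → (S u).Nonempty := by
      intro u hu
      unfold Good at hu
      push Not at hu
      obtain ⟨x, h1, h2⟩ := hu
      exact ⟨x, by simp [S, h1, h2]⟩
    let t : Equiv.Perm (Fin n) → Equiv.Perm (Fin n) := fun u =>
      if h : (S u).Nonempty then u * hf σ ((S u).min' h) else u
    have main : ∀ u ∈ U.filter (fun u => ¬ Good σ u), ∃ x, x ∈ S u ∧ t u = u * hf σ x ∧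
        S (t u) = S u ∧ t u ∈ U.filter (fun u => ¬ Good σ u) ∧ t (t u) = u := by
      intro u hu
      have h := hS u (mem_filter.1 hu).2
      have hU' := (memU u).1 (mem_filter.1 hu).1
      obtain ⟨hu2, huc, huθ⟩ := hU'
      set x := (S u).min' h with hx
      have hxm : x ∈ S u := Finset.min'_mem _ _
      have hxm' : σ.SameCycle x (u x) ∧ Even (ell σ x) := by
        have := hxm; simp only [S, mem_filter, mem_univ, true_and] at this; exact this
      have ht : t u = u * hf σ x := by simp only [t, dif_pos h]; rfl
      have hSt : S (t u) = S u := by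
        ext y
        simp only [S, mem_filter, mem_univ, true_and]
        refine and_congr_left fun _ => ?_
        rw [ht, Equiv.Perm.mul_apply]
        by_cases hy : σ.SameCycle x y
        · have a1 : σ.SameCycle x (u y) := hxm'.1.trans (same_map σ huc hy)
          have a2 : σ.SameCycle x (u (hf σ x y)) := hxm'.1.trans (same_map σ huc (hf_same σ hy))
          exact ⟨fun _ => hy.symm.trans a1, fun _ => hy.symm.trans a2⟩
        · rw [hf_out σ hy]
      refine ⟨x, hxm, ht, hSt, ?_, ?_⟩
      · rw [mem_filter, memU]
        refine ⟨⟨?_, ?_, ?_⟩, ?_⟩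
        · rw [ht]; intro y; simp only [Equiv.Perm.mul_apply]
          rw [hf_comm_u σ huc hxm'.1 hu2, hu2, hf_hf σ hxm'.2]
        · rw [ht]; intro y; simp only [Equiv.Perm.mul_apply]
          rw [hf_comm_σ, huc]
        · rw [ht]; intro y; rw [Equiv.Perm.mul_apply, huθ]
          by_cases hy : σ.SameCycle x y
          · rw [hf_in σ hy, hθp]
          · rw [hf_out σ hy]
        · intro hg
          have : x ∈ S (t u) := by rw [hSt]; exact hxm
          simp only [S, mem_filter, mem_univ, true_and] at this
          exact hg x this.1 this.2
      · have : t (t u) = t u * hf σ x := by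
          have h' : (S (t u)).Nonempty := by rw [hSt]; exact h
          have e : (S (t u)).min' h' = x := by rw [hx]; congr 1
          show (if h : (S (t u)).Nonempty then t u * hf σ ((S (t u)).min' h) else t u) = _
          rw [dif_pos h', e]
        rw [this, ht]; ext y; simp [hf_hf σ hxm'.2]
    refine Finset.sum_involution (fun u _ => t u) ?_ ?_ ?_ ?_
    · intro u hu
      obtain ⟨x, hx, ht, -⟩ := main u hu
      obtain ⟨hu2, huc, huθ⟩ := (memU u).1 (mem_filter.1 hu).1
      simp only [S, mem_filter, mem_univ, true_and] at hx
      rw [ht, tog' σ huc hu2 hx.1 hx.2]; ring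
    · intro u hu _ h
      obtain ⟨x, hx, ht, -⟩ := main u hu
      simp only [S, mem_filter, mem_univ, true_and] at hx
      rw [ht] at h
      have : hf σ x = 1 := by simpa using h
      exact hf_ne σ hx.2 (by rw [this]; rfl)
    · intro u hu; obtain ⟨x, -, -, -, h, -⟩ := main u hu; exact h
    · intro u hu; obtain ⟨x, -, -, -, -, h⟩ := main u hu; exact h
  rw [hbad, add_zero]
  have hgood : ∑ u ∈ U.filter (Good σ), psign σ u = ((U.filter (Good σ)).card : ℤ) := by
    rw [Finset.card_eq_sum_ones]; push_cast
    refine Finset.sum_congr rfl fun u hu => ?_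
    obtain ⟨hu2, huc, huθ⟩ := (memU u).1 (mem_filter.1 hu).1
    exact psign_good σ huc hu2 (mem_filter.1 hu).2
  rw [hgood]
  congr 1
  refine Finset.card_bij (fun u hu => Equiv.ofBijective (rt σ u) (rt_bij σ
    ((memU u).1 (mem_filter.1 hu).1).2.1 ((memU u).1 (mem_filter.1 hu).1).1 (mem_filter.1 hu).2)) ?_ ?_ ?_
  · intro u hu
    obtain ⟨hu2, huc, huθ⟩ := (memU u).1 (mem_filter.1 hu).1
    have hg := (mem_filter.1 hu).2
    simp only [mem_filter, mem_univ, true_and, Equiv.ofBijective_apply]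
    refine ⟨rt_rt σ huc hu2 hg, fun x => ?_⟩
    unfold rt; split_ifs
    · exact huθ x
    · rw [hθ, huθ]
    · exact hθp _ _
  · intro u hu v hv h
    have h' : ∀ x, rt σ u x = rt σ v x := fun x => Equiv.ext_iff.1 h x
    have rec1 : ∀ w ∈ U.filter (Good σ), ∀ x, w x = if cm σ x < cm σ (rt σ w x) then rt σ w x else
        if cm σ (rt σ w x) < cm σ x then σ⁻¹ (rt σ w x) else x := by
      intro w hw x
      obtain ⟨hw2, hwc, hwθ⟩ := (memU w).1 (mem_filter.1 hw).1
      have hg := (mem_filter.1 hw).2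
      rcases lt_trichotomy (cm σ x) (cm σ (w x)) with h | h | h
      · rw [rt1 σ h, if_pos h]
      · rw [rt3 σ h.symm, cm_pow, if_neg (lt_irrefl _), if_neg (lt_irrefl _)]
        exact good_fix σ hwc hw2 hg ((cm_eq σ).1 h)
      · rw [rt2 σ h, cm_σ, if_neg (not_lt.2 h.le), if_pos h]; simp
    ext x
    rw [rec1 u hu, rec1 v hv, h']
  · intro τ hτ
    simp only [mem_filter, mem_univ, true_and] at hτ
    obtain ⟨hτ, hτθ⟩ := hτ
    let w : Equiv.Perm (Fin n) := ⟨iv σ τ, iv σ τ, iv_iv hτ, iv_iv hτ⟩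
    have hw : ∀ x, w x = iv σ τ x := fun _ => rfl
    have hτiθ : ∀ x, θ (τ⁻¹ x) = θ x := fun x => by rw [← hτθ (τ⁻¹ x)]; simp
    refine ⟨w, ?_, ?_⟩
    · rw [mem_filter, memU]
      refine ⟨⟨iv_iv hτ, iv_comm hτ, fun x => ?_⟩, fun x => iv_odd hτ x⟩
      rw [hw]; unfold iv; split_ifs
      · exact hτθ x
      · exact hτiθ x
      · rfl
    · refine Equiv.ext fun x => ?_
      rw [Equiv.ofBijective_apply]
      rcases lt_trichotomy (cm σ x) (cm σ (τ x)) with h | h | h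
      · have e : w x = τ x := iv1 σ h
        rw [rt1 σ (by rw [e]; exact h), e]
      · have e : w x = x := iv3 σ h.symm
        rw [rt3 σ (by rw [e]), (root_odd hτ h).2]
      · have e : w x = τ⁻¹ x := iv2 σ h
        rw [rt2 σ (by rw [e, cm_τinv hτ]; exact h), e, τinv hτ]

end roots
end GM

namespace GM
section fin
variable {r n : ℕ} [NeZero r]

theorem Bsign (hr : Even r) (π w : Wreath r n) :
    (-1 : ℤ) ^ (Bset π w).card = ∏ i, if w.1 i = i then sgn (w.2 i) (π.2 i) else 1 := by
  classical
  rw [← Finset.prod_const]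
  have : Bset π w = univ.filter (fun i => w.1 i = i ∧
      ((w.2 i).val % 2 = 1 ∧ r/2 ≤ ((((w.2 i).val/2:ℕ):ZMod r)+π.2 i).val)) := by
    ext i
    simp only [Bset, mem_filter, mem_univ, true_and, mem_range]
    refine and_congr_right fun _ => ?_
    constructor
    · rintro ⟨k, hk, h1, h2⟩
      rw [h1]
      refine ⟨by omega, ?_⟩
      rw [show (2 * k + 1) / 2 = k by omega]
      exact h2
    · rintro ⟨h1, h2⟩
      refine ⟨(w.2 i).val / 2, ?_, by omega, h2⟩
      have := ZMod.val_lt (w.2 i)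
      obtain ⟨m, hm⟩ := hr
      omega
  rw [this, Finset.prod_filter]
  refine Finset.prod_congr rfl fun i _ => ?_
  unfold sgn
  by_cases h : w.1 i = i <;> simp [h]

theorem signE_eq (hr : Even r) (π w : Wreath r n) :
    signE π w = (∏ i, if w.1 i = i then sgn (w.2 i) (π.2 i) else 1) * psign π.1 w.1 := by
  unfold signE psign
  rw [Bsign hr]

theorem absInv_iff (w : Wreath r n) :
    w * Wreath.bar w = 1 ↔ (∀ i, w.1 (w.1 i) = i) ∧ ∀ i, w.2 (w.1 i) = w.2 i := by
  refine (Prod.ext_iff (α := Equiv.Perm (Fin n)) (β := Fin n → ZMod r)).trans ?_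
  refine and_congr ?_ ?_
  · exact Equiv.ext_iff
  · rw [funext_iff]
    refine forall_congr' fun i => ?_
    show w.2 (w.1 i) + -w.2 i = 0 ↔ _
    rw [← sub_eq_add_neg, sub_eq_zero]

theorem conj_fst (π w : Wreath r n) : (π * w * Wreath.tr π).1 = π.1 * w.1 * π.1⁻¹ := by
  rw [tr_mk]; rfl

theorem conj_snd (π w : Wreath r n) (i : Fin n) :
    (π * w * Wreath.tr π).2 (π.1 i) = w.2 i + π.2 i + π.2 (w.1 i) := by
  rw [tr_mk]
  show (π.2 (w.1 (π.1⁻¹ (π.1 i))) + w.2 (π.1⁻¹ (π.1 i))) + π.2 (π.1⁻¹ (π.1 i)) = _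
  have : π.1⁻¹ (π.1 i) = i := by simp
  rw [this]; ring

theorem conj_iff (π w : Wreath r n) : π * w * Wreath.tr π = w ↔
    (∀ i, w.1 (π.1 i) = π.1 (w.1 i)) ∧ ∀ i, w.2 (π.1 i) = w.2 i + π.2 i + π.2 (w.1 i) := by
  constructor
  · intro h
    have h1 := conj_fst π w
    have h2 := conj_snd π w
    rw [h] at h1 h2
    refine ⟨fun i => ?_, h2⟩
    conv_lhs => rw [h1]
    simp
  · rintro ⟨h1, h2⟩
    refine Prod.ext ?_ (funext fun j => ?_)
    · rw [conj_fst]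
      refine Equiv.ext fun j => ?_
      obtain ⟨i, rfl⟩ := π.1.surjective j
      simp [h1]
    · obtain ⟨i, rfl⟩ := π.1.surjective j
      rw [conj_snd, h2]

theorem signE_mul (hr : Even r) (π₁ π₂ : Wreath r n) (w : AbsInv r n) :
    signE (π₁ * π₂) w.1 = signE π₁ (conjAbs π₂ w).1 * signE π₂ w.1 := by
  have hw := (absInv_iff w.1).1 w.2
  rw [signE_eq hr, signE_eq hr, signE_eq hr]
  show _ * psign (π₁.1 * π₂.1) w.1.1 = (_ * psign π₁.1 (π₂ * w.1 * Wreath.tr π₂).1) * _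
  rw [psign_mul hw.1, conj_fst]
  have : (∏ i, if w.1.1 i = i then sgn (w.1.2 i) ((π₁ * π₂).2 i) else 1) =
      (∏ i, if (conjAbs π₂ w).1.1 i = i then sgn ((conjAbs π₂ w).1.2 i) (π₁.2 i) else 1) *
      ∏ i, if w.1.1 i = i then sgn (w.1.2 i) (π₂.2 i) else 1 := by
    rw [← Equiv.prod_comp π₂.1 (fun i => if (conjAbs π₂ w).1.1 i = i then sgn ((conjAbs π₂ w).1.2 i) (π₁.2 i) else 1), ← Finset.prod_mul_distrib]
    refine Finset.prod_congr rfl fun i _ => ?_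
    have e1 : (conjAbs π₂ w).1.1 (π₂.1 i) = π₂.1 (w.1.1 i) := by
      show (π₂ * w.1 * Wreath.tr π₂).1 _ = _
      rw [conj_fst]; simp
    have e2 : (conjAbs π₂ w).1.2 (π₂.1 i) = w.1.2 i + π₂.2 i + π₂.2 (w.1.1 i) := conj_snd π₂ w.1 i
    have e3 : (π₁ * π₂).2 i = π₂.2 i + π₁.2 (π₂.1 i) := add_comm _ _
    rw [e1, e2, e3]
    by_cases h : w.1.1 i = i
    · rw [if_pos h, if_pos (by rw [h]), if_pos h, sgn_cocycle hr, h, mul_comm]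
      congr 2
      ring
    · rw [if_neg h, if_neg (fun h' => h (π₂.1.injective h')), if_neg h, one_mul]
  rw [this]; ring

theorem signE_one (hr : Even r) (w : Wreath r n) : signE 1 w = 1 := by
  rw [signE_eq hr]
  show _ * psign (1 : Equiv.Perm (Fin n)) w.1 = 1
  rw [psign_one, mul_one]
  refine Finset.prod_eq_one fun i _ => ?_
  split_ifs with h
  · show sgn (w.2 i) 0 = 1
    unfold sgn
    rw [if_neg]
    rintro ⟨h1, h2⟩
    rw [add_zero] at h2
    have := ZMod.val_lt (w.2 i)
    rw [ZMod.val_natCast_of_lt (by omega)] at h2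
    obtain ⟨m, hm⟩ := hr
    omega
  · rfl

theorem conjAbs_one (w : AbsInv r n) : conjAbs 1 w = w := by
  apply Subtype.ext
  show 1 * w.1 * Wreath.tr 1 = w.1
  have : Wreath.tr (1 : Wreath r n) = 1 := by
    have h := tr_mk (1 : Wreath r n); rw [h]; rfl
  rw [this, one_mul, mul_one]

theorem conjAbs_mul (π₁ π₂ : Wreath r n) (w : AbsInv r n) :
    conjAbs (π₁ * π₂) w = conjAbs π₁ (conjAbs π₂ w) := by
  apply Subtype.ext
  show π₁ * π₂ * w.1 * Wreath.tr (π₁ * π₂) = π₁ * (π₂ * w.1 * Wreath.tr π₂) * Wreath.tr π₁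
  rw [tr_mul]; group

/-- the operator -/
noncomputable def op (π : Wreath r n) : (AbsInv r n → ℂ) →ₗ[ℂ] (AbsInv r n → ℂ) :=
  (Pi.basisFun ℂ (AbsInv r n)).constr ℂ
    (fun w => (signE π w.1 : ℂ) • (Pi.single (conjAbs π w) (1 : ℂ) : AbsInv r n → ℂ))

theorem op_single (π : Wreath r n) (w : AbsInv r n) : op π (Pi.single w (1 : ℂ)) =
    (signE π w.1 : ℂ) • (Pi.single (conjAbs π w) (1 : ℂ) : AbsInv r n → ℂ) := by
  unfold op
  rw [← Pi.basisFun_apply, Module.Basis.constr_basis]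

/-- the representation -/
noncomputable def rep (hr : Even r) : Representation ℂ (Wreath r n) (AbsInv r n → ℂ) where
  toFun := op
  map_one' := by
    refine (Pi.basisFun ℂ (AbsInv r n)).ext fun w => ?_
    rw [Pi.basisFun_apply, op_single, signE_one hr, conjAbs_one]; simp
  map_mul' π₁ π₂ := by
    refine (Pi.basisFun ℂ (AbsInv r n)).ext fun w => ?_
    rw [Module.End.mul_apply, Pi.basisFun_apply, op_single, op_single, map_smul, op_single, smul_smul,
      signE_mul hr, conjAbs_mul, Int.cast_mul, mul_comm]

theorem trace_op (π : Wreath r n) : LinearMap.trace ℂ _ (op π) =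
    ∑ w : AbsInv r n, if conjAbs π w = w then (signE π w.1 : ℂ) else 0 := by
  rw [LinearMap.trace_eq_matrix_trace ℂ (Pi.basisFun ℂ (AbsInv r n)), Matrix.trace]
  refine Finset.sum_congr rfl fun w _ => ?_
  rw [Matrix.diag_apply, LinearMap.toMatrix_apply, Pi.basisFun_apply, op_single, Pi.basisFun_repr,
    Pi.smul_apply, Pi.single_apply]
  by_cases h : conjAbs π w = w
  · rw [if_pos h, if_pos h.symm]; simp
  · rw [if_neg h, if_neg (Ne.symm h)]; simp

theorem sum_wreath (F : Equiv.Perm (Fin n) → (Fin n → ZMod r) → ℂ) :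
    ∑ x : Wreath r n, F x.1 x.2 = ∑ u, ∑ d, F u d :=
  Fintype.sum_prod_type (fun x : Equiv.Perm (Fin n) × (Fin n → ZMod r) => F x.1 x.2)

theorem trace_sum (hr : Even r) (π : Wreath r n) : LinearMap.trace ℂ _ (op π) =
    ∑ u ∈ univ.filter (fun u : Equiv.Perm (Fin n) => (∀ x, u (u x) = x) ∧ (∀ x, u (π.1 x) = π.1 (u x))),
      (psign π.1 u : ℂ) * ∑ θ ∈ univ.filter (fun θ : Fin n → ZMod r => (∀ i, θ (u i) = θ i) ∧
        ∀ i, θ (π.1 i) = θ i), ∏ i, ee (θ i * π.2 i) := by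
  classical
  rw [trace_op]
  have e1 : (∑ w : AbsInv r n, if conjAbs π w = w then (signE π w.1 : ℂ) else 0) =
      ∑ x : Wreath r n, if ((∀ i, x.1 (x.1 i) = i) ∧ ∀ i, x.1 (π.1 i) = π.1 (x.1 i)) then
        (if ((∀ i, x.2 (x.1 i) = x.2 i) ∧ ∀ i, x.2 (π.1 i) = x.2 i + π.2 i + π.2 (x.1 i)) then
        (psign π.1 x.1 : ℂ) * ∏ i, (if x.1 i = i then (sgn (x.2 i) (π.2 i) : ℂ) else 1) else 0) else 0 := by
    letI inst0 : Fintype {x : Wreath r n // x * Wreath.bar x = 1} := inferInstanceAs (Fintype (AbsInv r n))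
    have := Finset.sum_subtype (F := inst0) (univ.filter fun x : Wreath r n => x * Wreath.bar x = 1)
      (p := fun x => x * Wreath.bar x = 1) (by intro x; simp)
      (fun x => if π * x * Wreath.tr π = x then (signE π x : ℂ) else 0)
    have h2 : (∑ w : AbsInv r n, if conjAbs π w = w then (signE π w.1 : ℂ) else 0) =
      ∑ x ∈ univ.filter (fun x : Wreath r n => x * Wreath.bar x = 1),
        if π * x * Wreath.tr π = x then (signE π x : ℂ) else 0 := by
      refine Eq.trans ?_ this.symm
      refine Finset.sum_congr rfl fun w _ => ?_
      have : conjAbs π w = w ↔ π * w.1 * Wreath.tr π = w.1 := Subtype.ext_iff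
      by_cases h : conjAbs π w = w
      · rw [if_pos h, if_pos (this.1 h)]
      · rw [if_neg h, if_neg (fun h' => h (this.2 h'))]
    rw [h2, Finset.sum_filter]
    refine Finset.sum_congr rfl fun x _ => ?_
    rw [← ite_and, ← ite_and]
    refine if_congr ?_ ?_ rfl
    · rw [absInv_iff, conj_iff]; tauto
    · rw [signE_eq hr]; push_cast; rw [mul_comm]
  rw [e1, sum_wreath (fun u d => if ((∀ i, u (u i) = i) ∧ ∀ i, u (π.1 i) = π.1 (u i)) then
        (if ((∀ i, d (u i) = d i) ∧ ∀ i, d (π.1 i) = d i + π.2 i + π.2 (u i)) then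
        (psign π.1 u : ℂ) * ∏ i, (if u i = i then (sgn (d i) (π.2 i) : ℂ) else 1) else 0) else 0),
    Finset.sum_filter]
  refine Finset.sum_congr rfl fun u _ => ?_
  by_cases h : (∀ i, u (u i) = i) ∧ ∀ i, u (π.1 i) = π.1 (u i)
  · simp only [if_pos h]
    have F := fourier_u hr u π.1 h.1 h.2 π.2
    refine Eq.trans ?_ (Eq.trans (congrArg (fun z => (psign π.1 u : ℂ) * z) F) ?_)
    · simp only [Finset.mul_sum, Finset.sum_filter, mul_ite, mul_zero]
    · congr!
  · simp only [if_neg h]; simp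

theorem trace_count (hr : Even r) (π : Wreath r n) : LinearMap.trace ℂ _ (op π) =
    ((univ.filter fun x => π * Wreath.tr x = x).card : ℂ) := by
  classical
  rw [trace_sum hr]
  have s1 : ∑ u ∈ univ.filter (fun u : Equiv.Perm (Fin n) => (∀ x, u (u x) = x) ∧ (∀ x, u (π.1 x) = π.1 (u x))),
      (psign π.1 u : ℂ) * ∑ θ ∈ univ.filter (fun θ : Fin n → ZMod r => (∀ i, θ (u i) = θ i) ∧
        ∀ i, θ (π.1 i) = θ i), ∏ i, ee (θ i * π.2 i) =
      ∑ θ ∈ univ.filter (fun θ : Fin n → ZMod r => ∀ i, θ (π.1 i) = θ i),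
        (∏ i, ee (θ i * π.2 i)) *
        ((univ.filter (fun τ : Equiv.Perm (Fin n) => (∀ x, τ (τ x) = π.1 x) ∧ ∀ x, θ (τ x) = θ x)).card : ℂ) := by
    simp only [Finset.mul_sum]
    rw [Finset.sum_comm' (t' := univ.filter (fun θ : Fin n → ZMod r => ∀ i, θ (π.1 i) = θ i))
      (s' := fun θ => univ.filter (fun u : Equiv.Perm (Fin n) => (∀ x, u (u x) = x) ∧
        (∀ x, u (π.1 x) = π.1 (u x)) ∧ ∀ x, θ (u x) = θ x))]
    · refine Finset.sum_congr rfl fun θ hθ => ?_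
      rw [mem_filter] at hθ
      have := congrArg (fun z : ℤ => (z : ℂ)) (root_count π.1 θ hθ.2)
      simp only [Int.cast_sum, Int.cast_natCast] at this
      rw [← this, Finset.mul_sum]
      exact Finset.sum_congr rfl fun u _ => mul_comm _ _
    · intro u θ
      simp only [mem_filter, mem_univ, true_and]; tauto
  have s2 : ∑ θ ∈ univ.filter (fun θ : Fin n → ZMod r => ∀ i, θ (π.1 i) = θ i),
        (∏ i, ee (θ i * π.2 i)) *
        ((univ.filter (fun τ : Equiv.Perm (Fin n) => (∀ x, τ (τ x) = π.1 x) ∧ ∀ x, θ (τ x) = θ x)).card : ℂ) =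
      ∑ τ ∈ univ.filter (fun τ : Equiv.Perm (Fin n) => ∀ x, τ (τ x) = π.1 x),
        ∑ θ ∈ univ.filter (fun θ : Fin n → ZMod r => ∀ q, θ (τ q) = θ q), ∏ i, ee (θ i * π.2 i) := by
    rw [Finset.sum_comm' (t' := univ.filter (fun θ : Fin n → ZMod r => ∀ i, θ (π.1 i) = θ i))
      (s' := fun θ => univ.filter (fun τ : Equiv.Perm (Fin n) => (∀ x, τ (τ x) = π.1 x) ∧
        ∀ x, θ (τ x) = θ x))]
    · refine Finset.sum_congr rfl fun θ _ => ?_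
      rw [Finset.sum_const, nsmul_eq_mul, mul_comm]
    · intro τ θ
      simp only [mem_filter, mem_univ, true_and]
      constructor
      · rintro ⟨h1, h2⟩
        exact ⟨⟨h1, h2⟩, fun i => by rw [← h1, h2, h2]⟩
      · rintro ⟨⟨h1, h2⟩, _⟩; exact ⟨h1, h2⟩
  have s3 : ((univ.filter fun x => π * Wreath.tr x = x).card : ℂ) =
      ∑ x : Wreath r n, if (∀ i, x.1 (x.1 i) = π.1 i) then (if (∀ i, x.2 (x.1 i) = x.2 i + π.2 i) then (1:ℂ) else 0)
        else 0 := by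
    rw [Finset.card_eq_sum_ones, Finset.sum_filter]
    push_cast
    refine Finset.sum_congr rfl fun x _ => ?_
    rw [← ite_and]
    refine if_congr ?_ rfl rfl
    rw [tr_mk]
    constructor
    · intro h
      have h1 : π.1 * x.1⁻¹ = x.1 := congrArg Prod.fst h
      have h2 : ∀ i, π.2 (x.1⁻¹ i) + x.2 (x.1⁻¹ i) = x.2 i := fun i => congrFun (congrArg Prod.snd h) i
      refine ⟨fun i => ?_, fun i => ?_⟩
      · have := Equiv.ext_iff.1 h1 (x.1 i)
        simpa using this.symm
      · have := h2 (x.1 i)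
        have e : x.1⁻¹ (x.1 i) = i := by simp
        rw [e] at this
        rw [← this, add_comm]
    · rintro ⟨h1, h2⟩
      refine Prod.ext ?_ (funext fun j => ?_)
      · show π.1 * x.1⁻¹ = x.1
        refine Equiv.ext fun j => ?_
        obtain ⟨i, rfl⟩ := x.1.surjective j
        simp [h1]
      · show π.2 (x.1⁻¹ j) + x.2 (x.1⁻¹ j) = x.2 j
        obtain ⟨i, rfl⟩ := x.1.surjective j
        have e : x.1⁻¹ (x.1 i) = i := by simp
        rw [e, h2, add_comm]
  rw [s1, s2, s3, sum_wreath (fun u d => if (∀ i, u (u i) = π.1 i) then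
    (if (∀ i, d (u i) = d i + π.2 i) then (1:ℂ) else 0) else 0), Finset.sum_filter]
  refine Finset.sum_congr rfl fun τ _ => ?_
  by_cases h : ∀ i, τ (τ i) = π.1 i
  · simp only [if_pos h]
    have F := fourier_count hr τ π.2
    refine Eq.trans ?_ (F.symm.trans ?_)
    · congr!
    · rw [Finset.card_eq_sum_ones, Finset.sum_filter]
      push_cast
      congr!
  · simp only [if_neg h]; simp

end fin
end GM

/-- **Gelfand model for `ℤ_r ≀ S_n`, `r` even** (Theorem `t.model`, even case):
the map `ρ` with `ρ(π) C_w = sign_e(π,w) · C_{π w πᵗ}` on the vector space `V_{r,n}`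
with basis `{C_w : w ∈ I_{r,n}}` is a group homomorphism (a linear representation),
and the trace of `ρ(π)` equals `∑_{χ ∈ Irr(G(r,n))} χ(π)` for every `π`; i.e. `ρ` is a
Gelfand model for `G(r,n)`. -/
theorem gelfand_model_even
    (r n : ℕ) [NeZero r] (hn : 0 < n) (hr : Even r)
    {ι : Type} [Fintype ι] (V : ι → FDRep ℂ (Wreath r n))
    (hV : IsCompleteIrrFamily V) :
    ∃ ρ : Representation ℂ (Wreath r n) (AbsInv r n → ℂ),
      (∀ (π : Wreath r n) (w : AbsInv r n),
        ρ π (Pi.single w (1 : ℂ)) =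
          (signE π w.1 : ℂ) • (Pi.single (conjAbs π w) (1 : ℂ) : AbsInv r n → ℂ)) ∧
      ∀ π : Wreath r n,
        LinearMap.trace ℂ (AbsInv r n → ℂ) (ρ π) = ∑ i, (V i).character π := by
  refine ⟨GM.rep hr, fun π w => GM.op_single π w, fun π => ?_⟩
  rw [GM.sum_char_wreath V hV π]
  exact GM.trace_count hr π
end

section
/- For all π₁, π₂ ∈ G(r,n) and every absolute involution w ∈ I_{r,n}, sign_o(π₂π₁, w) = sign_o(π₁, w) · sign_o(π₂, π₁ w π₁ᵗ). -/
open Finset CategoryTheory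

theorem signO_eq_prod {r n : ℕ} (π w : Wreath r n) :
    signO π w = ∏ p ∈ pairSet w.1, if π.1 p.2 < π.1 p.1 then (-1 : ℤ) else 1 := by
  unfold signO
  rw [Finset.prod_ite]
  simp only [Finset.prod_const, one_pow, mul_one]
  congr 2
  ext p
  simp only [invPairs, pairSet, Finset.mem_inter, Finset.mem_filter, Finset.mem_univ, true_and]
  tauto

/-- The increasing rearrangement of the image of a pair. -/
def sortMap {n : ℕ} (σ : Equiv.Perm (Fin n)) (p : Fin n × Fin n) : Fin n × Fin n :=
  if σ p.1 < σ p.2 then (σ p.1, σ p.2) else (σ p.2, σ p.1)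

theorem sortMap_mem {n : ℕ} (σ u v : Equiv.Perm (Fin n)) (hv : ∀ x, v (σ x) = σ (u x))
    (p : Fin n × Fin n) (hp : p ∈ pairSet u) : sortMap σ p ∈ pairSet v := by
  obtain ⟨a, b⟩ := p
  simp only [pairSet, Finset.mem_filter, Finset.mem_univ, true_and] at hp ⊢
  obtain ⟨h1, h2, h3⟩ := hp
  have hne : σ a ≠ σ b := fun h => h1.ne (σ.injective h)
  unfold sortMap
  split_ifs with h
  · exact ⟨h, by simp only [hv, h2], by simp only [hv, h3]⟩
  · exact ⟨lt_of_le_of_ne (not_lt.mp h) hne.symm, by simp only [hv, h3], by simp only [hv, h2]⟩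

theorem sortMap_sortMap {n : ℕ} (σ ρ : Equiv.Perm (Fin n)) (hρ : ∀ x, ρ (σ x) = x)
    (p : Fin n × Fin n) (hp : p.1 < p.2) : sortMap ρ (sortMap σ p) = p := by
  obtain ⟨a, b⟩ := p
  have hp' : a < b := hp
  unfold sortMap
  by_cases h : σ a < σ b
  · simp [h, hρ, hp']
  · simp [h, hρ, hp'.not_gt]

/-- **Multiplicativity of `sign_o`** (equation (3) of the paper, Part 1 of the proof of
Theorem `t.model` for odd `r`): for all `π₁, π₂ ∈ G(r,n)` and every absolute involution
`w`, `sign_o(π₂π₁, w) = sign_o(π₁, w) · sign_o(π₂, π₁ w π₁ᵗ)`. -/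
theorem signO_mul
    (r n : ℕ) [NeZero r] (hn : 0 < n) (π₁ π₂ w : Wreath r n)
    (hw : w * Wreath.bar w = 1) :
    signO (π₂ * π₁) w = signO π₁ w * signO π₂ (π₁ * w * Wreath.tr π₁) := by
  have hv : ∀ x, (π₁ * w * Wreath.tr π₁).1 (π₁.1 x) = π₁.1 (w.1 x) := by
    intro x
    show π₁.1 (w.1 (π₁.1⁻¹ (π₁.1 x))) = _
    simp
  rw [signO_eq_prod, signO_eq_prod, signO_eq_prod]
  have key : (∏ p ∈ pairSet (π₁ * w * Wreath.tr π₁).1,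
        if π₂.1 p.2 < π₂.1 p.1 then (-1 : ℤ) else 1)
      = ∏ p ∈ pairSet w.1, if π₂.1 (sortMap π₁.1 p).2 < π₂.1 (sortMap π₁.1 p).1
          then (-1 : ℤ) else 1 := by
    symm
    refine Finset.prod_bij' (fun p _ => sortMap π₁.1 p) (fun p _ => sortMap π₁.1⁻¹ p)
      (fun p hp => sortMap_mem _ _ _ hv p hp) (fun p hp => sortMap_mem _ _ _ ?_ p hp)
      (fun p hp => sortMap_sortMap _ _ (by simp) p ?_)
      (fun p hp => sortMap_sortMap _ _ (by simp) p ?_) (fun p hp => rfl)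
    · intro x
      rw [Equiv.Perm.eq_inv_iff_eq, ← hv]
      simp
    · exact (Finset.mem_filter.mp hp).2.1
    · exact (Finset.mem_filter.mp hp).2.1
  rw [key, ← Finset.prod_mul_distrib]
  refine Finset.prod_congr rfl fun p hp => ?_
  have hlt : p.1 < p.2 := (Finset.mem_filter.mp hp).2.1
  have hne : π₁.1 p.1 ≠ π₁.1 p.2 := fun h => hlt.ne (π₁.1.injective h)
  have hne2 : π₂.1 (π₁.1 p.1) ≠ π₂.1 (π₁.1 p.2) := fun h => hne (π₂.1.injective h)
  show (if π₂.1 (π₁.1 p.2) < π₂.1 (π₁.1 p.1) then (-1 : ℤ) else 1) = _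
  unfold sortMap
  rcases lt_or_gt_of_ne hne with h | h <;> rcases lt_or_gt_of_ne hne2 with h' | h' <;>
    simp [h, h', h.not_gt, h'.not_gt]
end

section
/- Let d be odd and let v = (σ,z) ∈ G(r,d) with σ a d-cycle (its support is all of {1,…,d}). Then w := v·v̄ satisfies: |w| = σ² is a single d-cycle, and the total color of w is 0, i.e. ∑_{i=1}^{d} z_w(i) = 0 in ℤ/rℤ. Moreover, for every w ∈ G(r,d) such that |w| is a d-cycle and ∑_i z_w(i) = 0, the number of elements v ∈ G(r,d) with |v| a d-cycle and v·v̄ = w equals r. -/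
open Finset CategoryTheory

/-- `σ` is a single `d`-cycle on all of `Fin d`: every point can be moved to every
other point by a power of `σ` (for `d = 1` this is the identity permutation). -/
def IsFullCycle {d : ℕ} (σ : Equiv.Perm (Fin d)) : Prop :=
  ∀ x y : Fin d, ∃ k : ℕ, (σ ^ k) x = y

theorem IsFullCycle.onCyc {d : ℕ} {σ : Equiv.Perm (Fin d)} (h : IsFullCycle σ) :
    σ.IsCycleOn ((Finset.univ : Finset (Fin d)) : Set (Fin d)) := by
  refine ⟨?_, fun x _ y _ => ?_⟩
  · simpa using σ.bijective
  · obtain ⟨k, hk⟩ := h x y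
    exact ⟨k, by simpa using hk⟩

theorem IsFullCycle.pow_d {d : ℕ} {σ : Equiv.Perm (Fin d)} (h : IsFullCycle σ) : σ ^ d = 1 := by
  ext x
  have := h.onCyc.pow_card_apply (Finset.mem_univ x)
  rw [Finset.card_univ, Fintype.card_fin] at this
  simp [this]

theorem full_pot {r d : ℕ} {σ : Equiv.Perm (Fin d)} (h : IsFullCycle σ) (x0 : Fin d)
    (c : Fin d → ZMod r) (hc : ∑ i, c i = 0) (a : ZMod r) :
    ∃ z : Fin d → ZMod r, z x0 = a ∧ ∀ i, z (σ i) - z i = c i := by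
  choose k hk using h x0
  let S : ℕ → ZMod r := fun n => ∑ j ∈ Finset.range n, c ((σ ^ j) x0)
  have hSd : S d = 0 := by
    rw [← hc]
    show ∑ j ∈ Finset.range d, c ((σ ^ j) x0) = _
    rw [Finset.sum_range]
    have hs : Function.Surjective (fun j : Fin d => (σ ^ (j : ℕ)) x0) := by
      intro y
      obtain ⟨m, hm, e⟩ := h.onCyc.exists_pow_eq (Finset.mem_univ x0) (Finset.mem_univ y)
      rw [Finset.card_univ, Fintype.card_fin] at hm
      exact ⟨⟨m, hm⟩, e⟩
    exact Fintype.sum_bijective _ (Finite.surjective_iff_bijective.1 hs) _ _ (fun _ => rfl)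
  have hper : Function.Periodic S d := by
    intro n
    induction n with
    | zero => rw [zero_add, hSd]; simp [S]
    | succ n ih =>
      have e1 : S (n + 1 + d) = S (n + d) + c ((σ ^ (n + d)) x0) := by
        rw [show n + 1 + d = (n + d) + 1 by ring]; exact Finset.sum_range_succ _ _
      have e2 : S (n + 1) = S n + c ((σ ^ n) x0) := Finset.sum_range_succ _ _
      rw [e1, e2, ih, pow_add, h.pow_d, mul_one]
  have hwd : ∀ m n, (σ ^ m) x0 = (σ ^ n) x0 → S m = S n := by
    intro m n e
    have := (h.onCyc.pow_apply_eq_pow_apply (Finset.mem_univ x0)).1 e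
    rw [Finset.card_univ, Fintype.card_fin] at this
    rw [← hper.map_mod_nat m, ← hper.map_mod_nat n, this]
  refine ⟨fun y => a + S (k y), ?_, fun i => ?_⟩
  · have : S (k x0) = S 0 := hwd _ _ (by rw [hk]; simp)
    show a + S (k x0) = a
    rw [this]; simp [S]
  · have : S (k (σ i)) = S (k i + 1) := hwd _ _ (by rw [hk, pow_succ', Equiv.Perm.mul_apply, hk])
    have e2 : S (k i + 1) = S (k i) + c ((σ ^ (k i)) x0) := Finset.sum_range_succ _ _
    show a + S (k (σ i)) - (a + S (k i)) = c i
    rw [this, e2, hk]; ring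

theorem full_uniq {r d : ℕ} {σ : Equiv.Perm (Fin d)} (h : IsFullCycle σ) (x0 : Fin d)
    (z z' : Fin d → ZMod r) (h0 : z x0 = z' x0)
    (hz : ∀ i, z (σ i) - z i = z' (σ i) - z' i) : z = z' := by
  have key : ∀ k : ℕ, z ((σ ^ k) x0) = z' ((σ ^ k) x0) := by
    intro k
    induction k with
    | zero => simpa using h0
    | succ k ih =>
      have := hz ((σ ^ k) x0)
      rw [pow_succ', Equiv.Perm.mul_apply]
      rw [ih] at this
      exact sub_left_injective this
  funext y
  obtain ⟨k, rfl⟩ := h x0 y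
  exact key k

theorem mul_bar_eq_iff {r d : ℕ} (v w : Wreath r d) :
    v * Wreath.bar v = w ↔ v.1 ^ 2 = w.1 ∧ ∀ i, v.2 (v.1 i) - v.2 i = w.2 i := by
  rw [Wreath.mul_def, pow_two]
  constructor
  · rintro rfl
    exact ⟨rfl, fun i => sub_eq_add_neg _ _⟩
  · rintro ⟨h1, h2⟩
    exact Prod.ext h1 (funext fun i => (sub_eq_add_neg _ _).symm.trans (h2 i))

/-- **Absolute squares of single cycles, odd length** (Observation, part 1):
for odd `d`, if `v = (σ,z) ∈ G(r,d)` with `σ` a `d`-cycle, then `w := v·v̄` has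
`|w| = σ²` a single `d`-cycle and total color `z(w) = 0`; and every `w` with `|w|` a
`d`-cycle and total color `0` arises from exactly `r` such `v`. -/
theorem absolute_square_of_odd_cycle
    (r d : ℕ) [NeZero r] (hd : Odd d) :
    (∀ v : Wreath r d, IsFullCycle v.1 →
      (v * Wreath.bar v).1 = v.1 ^ 2 ∧ IsFullCycle (v * Wreath.bar v).1 ∧
        ∑ i, (v * Wreath.bar v).2 i = 0) ∧
    (∀ w : Wreath r d, IsFullCycle w.1 → ∑ i, w.2 i = 0 →
      Nat.card {v : Wreath r d // IsFullCycle v.1 ∧ v * Wreath.bar v = w} = r) := by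
  obtain ⟨m, hm⟩ := hd
  refine ⟨fun v hv => ?_, fun w hw hsum => ?_⟩
  · obtain ⟨h1, h2⟩ := (mul_bar_eq_iff v _).1 rfl
    refine ⟨h1.symm, ?_, ?_⟩
    · rw [← h1]
      intro x y
      obtain ⟨k, hk⟩ := hv x y
      refine ⟨(m + 1) * k, ?_⟩
      rw [← pow_mul, show 2 * ((m + 1) * k) = d * k + k by rw [hm]; ring, pow_add, pow_mul,
        hv.pow_d, one_pow, one_mul, hk]
    · rw [← Finset.sum_congr rfl (fun i _ => h2 i), Finset.sum_sub_distrib,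
        Equiv.sum_comp v.1 v.2, sub_self]
  · let x0 : Fin d := ⟨0, by omega⟩
    let σ : Equiv.Perm (Fin d) := w.1 ^ (m + 1)
    have hσ2 : σ ^ 2 = w.1 := by
      show (w.1 ^ (m + 1)) ^ 2 = w.1
      rw [← pow_mul, show (m + 1) * 2 = d + 1 by omega, pow_add, hw.pow_d, one_mul, pow_one]
    have hσ : IsFullCycle σ := by
      intro x y
      obtain ⟨k, hk⟩ := hw x y
      exact ⟨2 * k, by rw [pow_mul, hσ2, hk]⟩
    have huniq : ∀ τ : Equiv.Perm (Fin d), IsFullCycle τ → τ ^ 2 = w.1 → τ = σ := by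
      intro τ hτ e
      show τ = w.1 ^ (m + 1)
      rw [← e, ← pow_mul, show 2 * (m + 1) = d + 1 by omega, pow_add, hτ.pow_d, one_mul, pow_one]
    have hb : Function.Bijective
        (fun v : {v : Wreath r d // IsFullCycle v.1 ∧ v * Wreath.bar v = w} => v.1.2 x0) := by
      constructor
      · rintro ⟨⟨s, z⟩, hs, e⟩ ⟨⟨t, z'⟩, ht, e'⟩ h0
        obtain ⟨e1, e2⟩ := (mul_bar_eq_iff _ _).1 e
        obtain ⟨e1', e2'⟩ := (mul_bar_eq_iff _ _).1 e'
        obtain rfl : s = σ := huniq s hs e1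
        obtain rfl : t = σ := huniq t ht e1'
        apply Subtype.ext
        exact Prod.ext rfl (full_uniq hσ x0 z z' h0 fun i => (e2 i).trans (e2' i).symm)
      · intro a
        obtain ⟨z, hz0, hz⟩ := full_pot hσ x0 w.2 hsum a
        exact ⟨⟨(σ, z), hσ, (mul_bar_eq_iff _ _).2 ⟨hσ2, hz⟩⟩, hz0⟩
    rw [Nat.card_congr (Equiv.ofBijective _ hb), Nat.card_zmod]
end

section
/- Let d = 2e be even and let v = (σ,z) ∈ G(r,d) with σ a d-cycle (its support is all of {1,…,d}). Then w := v·v̄ satisfies: |w| = σ² is a product of two disjoint cycles of length e whose supports partition {1,…,d}, and the sum of the colors of w over these two cycles is 0, i.e. ∑_{i=1}^{d} z_w(i) = 0 in ℤ/rℤ. Moreover, for every w ∈ G(r,d) such that |w| is a product of two disjoint e-cycles covering {1,…,d} and ∑_i z_w(i) = 0, the number of elements v ∈ G(r,d) with |v| a d-cycle and v·v̄ = w equals r·d/2. -/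
open Finset CategoryTheory

/-- `s` is (the support of) a single cycle of `σ`, i.e. an orbit of `σ`. -/
def IsOrbitSet {n : ℕ} (σ : Equiv.Perm (Fin n)) (s : Finset (Fin n)) : Prop :=
  s.Nonempty ∧ (∀ x ∈ s, σ x ∈ s) ∧ ∀ x ∈ s, ∀ y ∈ s, ∃ k : ℕ, (σ ^ k) x = y

/-- `σ` is a product of two disjoint `e`-cycles whose supports partition the
underlying set. -/
def IsTwoCycles {d : ℕ} (σ : Equiv.Perm (Fin d)) (e : ℕ) : Prop :=
  ∃ s t : Finset (Fin d), Disjoint s t ∧ s ∪ t = Finset.univ ∧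
    s.card = e ∧ t.card = e ∧ IsOrbitSet σ s ∧ IsOrbitSet σ t

theorem aux_bij {d : ℕ} (x : ℕ → Fin d) (hs : Function.Surjective x)
    (hp : ∀ n, x (n + d) = x n) (hd : 0 < d) :
    Function.Bijective (fun i : Fin d => x i) := by
  have hper : Function.Periodic x d := hp
  rw [← Finite.surjective_iff_bijective]
  intro y
  obtain ⟨n, rfl⟩ := hs y
  exact ⟨⟨n % d, Nat.mod_lt _ hd⟩, hper.map_mod_nat n⟩

theorem aux_lift {d : ℕ} (x : ℕ → Fin d) (hs : Function.Surjective x)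
    (hp : ∀ n, x (n + d) = x n) (hd : 0 < d) {A : Type} (g : ℕ → A)
    (hg : ∀ n, g (n + d) = g n) : ∃ z : Fin d → A, ∀ n, z (x n) = g n := by
  have hb := aux_bij x hs hp hd
  have hper : Function.Periodic x d := hp
  have hgper : Function.Periodic g d := hg
  let E := Equiv.ofBijective _ hb
  refine ⟨fun y => g (E.symm y), fun n => ?_⟩
  have h : E.symm (x n) = ⟨n % d, Nat.mod_lt _ hd⟩ := by
    rw [Equiv.symm_apply_eq]
    exact (hper.map_mod_nat n).symm
  simp only [h]
  exact hgper.map_mod_nat n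

theorem aux_cycleOn {n : ℕ} {σ : Equiv.Perm (Fin n)} {s : Finset (Fin n)}
    (h : IsOrbitSet σ s) : σ.IsCycleOn s := by
  obtain ⟨-, h1, h2⟩ := h
  refine ⟨⟨fun x hx => h1 x hx, σ.injective.injOn, ?_⟩, ?_⟩
  · exact Finset.surjOn_of_injOn_of_card_le σ (fun x hx => h1 x hx) σ.injective.injOn le_rfl
  · intro x hx y hy
    obtain ⟨k, hk⟩ := h2 x hx y hy
    exact ⟨k, by simpa using hk⟩

theorem aux_pow_card {n : ℕ} {σ : Equiv.Perm (Fin n)} {s : Finset (Fin n)}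
    (h : IsOrbitSet σ s) {a : Fin n} (ha : a ∈ s) : (σ ^ s.card) a = a :=
  (aux_cycleOn h).pow_card_apply ha

theorem aux_pow_mem {n : ℕ} {σ : Equiv.Perm (Fin n)} {s : Finset (Fin n)}
    (h : IsOrbitSet σ s) {a : Fin n} (ha : a ∈ s) (k : ℕ) : (σ ^ k) a ∈ s := by
  induction k with
  | zero => simpa using ha
  | succ k ih => rw [pow_succ', Equiv.Perm.mul_apply]; exact h.2.1 _ ih

theorem aux_two {e : ℕ} (he : 0 < e) (σ : Equiv.Perm (Fin (2 * e))) (h : IsFullCycle σ) :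
    IsTwoCycles (σ ^ 2) e := by
  have hd : 0 < 2 * e := by omega
  let a : Fin (2 * e) := ⟨0, hd⟩
  have ho : IsOrbitSet σ Finset.univ := ⟨⟨a, mem_univ _⟩, by simp, fun x _ y _ => h x y⟩
  have hs : Function.Surjective (fun n : ℕ => (σ ^ n) a) := fun y => h a y
  have hp : ∀ n : ℕ, (σ ^ (n + 2 * e)) a = (σ ^ n) a := by
    intro n
    have := aux_pow_card ho (mem_univ a)
    rw [Finset.card_univ, Fintype.card_fin] at this
    rw [pow_add, Equiv.Perm.mul_apply, this]
  obtain ⟨p, hpp⟩ := aux_lift _ hs hp hd (fun n => n % 2) (by intro n; simp)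
  have hσ : ∀ y, p (σ y) = (p y + 1) % 2 := by
    intro y
    obtain ⟨n, rfl⟩ := hs y
    have h1 := hpp (n + 1)
    have h2 := hpp n
    simp only [pow_succ', Equiv.Perm.mul_apply] at h1 h2 ⊢
    omega
  have hlt : ∀ y, p y < 2 := by
    intro y
    obtain ⟨n, rfl⟩ := hs y
    rw [hpp]; omega
  have hk : ∀ (k : ℕ) y, p ((σ ^ k) y) = (p y + k) % 2 := by
    intro k y
    induction k with
    | zero => have := hlt y; simp; omega
    | succ k ih => rw [pow_succ', Equiv.Perm.mul_apply, hσ, ih]; omega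
  have hcard : (univ.filter fun y => p y = 0).card = (univ.filter fun y => p y = 1).card := by
    apply Finset.card_bij (fun y _ => σ y)
    · intro y hy; simp at hy ⊢; rw [hσ, hy]
    · intro y _ z _ hyz; exact σ.injective hyz
    · intro y hy
      refine ⟨σ⁻¹ y, ?_, by simp⟩
      have h1 := hσ (σ⁻¹ y)
      have h2 := hlt (σ⁻¹ y)
      rw [show σ (σ⁻¹ y) = y from σ.apply_symm_apply y] at h1
      simp only [mem_filter, mem_univ, true_and] at hy ⊢
      omega
  have hdis : Disjoint (univ.filter fun y => p y = 0) (univ.filter fun y => p y = 1) := by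
    rw [Finset.disjoint_filter]; intro y _ h1 h2; omega
  have hun : (univ.filter fun y => p y = 0) ∪ (univ.filter fun y => p y = 1) = univ := by
    ext y; have := hlt y; simp; omega
  have hc := Finset.card_union_of_disjoint hdis
  rw [hun, Finset.card_univ, Fintype.card_fin] at hc
  have horb : ∀ x y, p x = p y → ∃ k : ℕ, ((σ ^ 2) ^ k) x = y := by
    intro x y hxy
    obtain ⟨m, hm⟩ := h x y
    have h1 := hk m x
    have h2 := hlt y
    rw [hm] at h1
    refine ⟨m / 2, ?_⟩
    rw [← pow_mul, show 2 * (m / 2) = m by omega, hm]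
  refine ⟨_, _, hdis, hun, by omega, by omega, ⟨?_, ?_, ?_⟩, ⟨?_, ?_, ?_⟩⟩
  · exact Finset.card_pos.mp (by omega)
  · intro x hx; simp only [mem_filter, mem_univ, true_and] at hx ⊢; rw [hk]; omega
  · intro x hx y hy; simp only [mem_filter, mem_univ, true_and] at hx hy
    exact horb x y (by omega)
  · exact Finset.card_pos.mp (by omega)
  · intro x hx; simp only [mem_filter, mem_univ, true_and] at hx ⊢; rw [hk]; omega
  · intro x hx y hy; simp only [mem_filter, mem_univ, true_and] at hx hy
    exact horb x y (by omega)

theorem aux_sq_iff {r n : ℕ} (v w : Wreath r n) : v * Wreath.bar v = w ↔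
    (∀ i, v.1 (v.1 i) = w.1 i) ∧ ∀ i, v.2 (v.1 i) = v.2 i + w.2 i := by
  have key : ∀ i, (v * Wreath.bar v).2 i = v.2 (v.1 i) + - v.2 i := fun i => rfl
  have key1 : ∀ i, (v * Wreath.bar v).1 i = v.1 (v.1 i) := fun i => rfl
  constructor
  · rintro rfl
    refine ⟨fun i => (key1 i).symm, fun i => ?_⟩
    rw [key]; ring
  · rintro ⟨h1, h2⟩
    refine Prod.ext (Equiv.ext fun i => ?_) (funext fun i => ?_)
    · rw [key1, h1]
    · rw [key, h2]; ring

theorem aux_exists {r e : ℕ} (he : 0 < e) (w : Wreath r (2 * e)) (s t : Finset (Fin (2 * e)))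
    (hun : s ∪ t = univ) (hsc : s.card = e) (htc : t.card = e)
    (hso : IsOrbitSet w.1 s) (hto : IsOrbitSet w.1 t) (h0 : ∑ i, w.2 i = 0)
    (a b : Fin (2 * e)) (ha : a ∈ s) (hb : b ∈ t) (c : ZMod r) :
    ∃ v : Wreath r (2 * e), (IsFullCycle v.1 ∧ v * Wreath.bar v = w) ∧ v.1 a = b ∧ v.2 a = c := by
  have hd : 0 < 2 * e := by omega
  let x : ℕ → Fin (2 * e) := fun n => if n % 2 = 0 then (w.1 ^ (n / 2)) a else (w.1 ^ (n / 2)) b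
  have x0 : x 0 = a := by simp [x]
  have x1 : x 1 = b := by simp [x]
  have x2 : ∀ n, x (n + 2) = w.1 (x n) := by
    intro n
    simp only [x, Nat.add_mod_right, show (n + 2) / 2 = n / 2 + 1 by omega, pow_succ',
      Equiv.Perm.mul_apply]
    split_ifs <;> rfl
  have hs : Function.Surjective x := by
    intro y
    have hy : y ∈ s ∪ t := by rw [hun]; exact mem_univ y
    rcases Finset.mem_union.mp hy with hy | hy
    · obtain ⟨k, hk⟩ := hso.2.2 a ha y hy
      exact ⟨2 * k, by simp [x, hk]⟩
    · obtain ⟨k, hk⟩ := hto.2.2 b hb y hy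
      refine ⟨2 * k + 1, ?_⟩
      simp only [x, show (2 * k + 1) % 2 = 1 by omega, show (2 * k + 1) / 2 = k by omega]
      simpa using hk
  have hp : ∀ n, x (n + 2 * e) = x n := by
    intro n
    have h1 := aux_pow_card hso ha
    have h2 := aux_pow_card hto hb
    rw [hsc] at h1
    rw [htc] at h2
    simp only [x, show (n + 2 * e) % 2 = n % 2 by omega, show (n + 2 * e) / 2 = n / 2 + e by omega,
      pow_add, Equiv.Perm.mul_apply, h1, h2]
  obtain ⟨f, hf⟩ := aux_lift x hs hp hd (fun n => x (n + 1))
    (by intro n; rw [← hp (n + 1)]; congr 1; ring)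
  have hfs : Function.Surjective f := by
    intro y
    obtain ⟨n, rfl⟩ := hs y
    refine ⟨x (n + 2 * e - 1), ?_⟩
    rw [hf, ← hp n]; congr 1; omega
  let σ : Equiv.Perm (Fin (2 * e)) := Equiv.ofBijective f (Finite.surjective_iff_bijective.mp hfs)
  have hσ : ∀ n, σ (x n) = x (n + 1) := hf
  have hσk : ∀ k n, (σ ^ k) (x n) = x (n + k) := by
    intro k n
    induction k with
    | zero => simp
    | succ k ih => rw [pow_succ', Equiv.Perm.mul_apply, ih, hσ]; rfl
  have hsum : ∑ i ∈ range (2 * e), w.2 (x i) = 0 := by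
    rw [Finset.sum_range, ← h0]
    exact Function.Bijective.sum_comp (aux_bij x hs hp hd) w.2
  let g : ℕ → ZMod r := fun n => c + ∑ i ∈ range n, w.2 (x i)
  have hg : ∀ n, g (n + 2 * e) = g n := by
    intro n
    induction n with
    | zero => simp [g, hsum]
    | succ n ih =>
      rw [show n + 1 + 2 * e = (n + 2 * e) + 1 by ring]
      simp only [g] at ih ⊢
      rw [Finset.sum_range_succ, Finset.sum_range_succ, ← add_assoc, ← add_assoc, ih, hp]
  obtain ⟨z, hz⟩ := aux_lift x hs hp hd g hg
  refine ⟨⟨σ, z⟩, ⟨?_, ?_⟩, ?_, ?_⟩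
  · intro y y'
    obtain ⟨n, rfl⟩ := hs y
    obtain ⟨m, rfl⟩ := hs y'
    have hper : Function.Periodic x (2 * e) := hp
    refine ⟨m + n * (2 * e) - n, ?_⟩
    show (σ ^ _) (x n) = x m
    have h1 : n ≤ n * (2 * e) := Nat.le_mul_of_pos_right n hd
    rw [hσk, show n + (m + n * (2 * e) - n) = m + n * (2 * e) by omega]
    exact hper.nat_mul n m
  · refine (aux_sq_iff _ _).mpr ⟨fun i => ?_, fun i => ?_⟩
    · obtain ⟨n, rfl⟩ := hs i
      show σ (σ (x n)) = _
      rw [hσ, hσ, ← x2]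
    · obtain ⟨n, rfl⟩ := hs i
      show z (σ (x n)) = z (x n) + _
      rw [hσ, hz, hz]
      simp only [g]
      rw [Finset.sum_range_succ, add_assoc]
  · show σ a = b
    rw [← x0, hσ, ← x1]
  · show z a = c
    rw [← x0, hz]; simp [g]

theorem aux_inj {r n : ℕ} (w v v' : Wreath r n) (a : Fin n)
    (h : IsFullCycle v.1) (hv : v * Wreath.bar v = w) (hv' : v' * Wreath.bar v' = w)
    (h1 : v.1 a = v'.1 a) (h2 : v.2 a = v'.2 a) : v = v' := by
  rw [aux_sq_iff] at hv hv'
  obtain ⟨p1, p2⟩ := hv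
  obtain ⟨q1, q2⟩ := hv'
  have key : ∀ k : ℕ, v.1 ((v.1 ^ k) a) = v'.1 ((v.1 ^ k) a) ∧
      v.2 ((v.1 ^ k) a) = v'.2 ((v.1 ^ k) a) := by
    intro k
    induction k with
    | zero => exact ⟨h1, h2⟩
    | succ k ih =>
      rw [pow_succ', Equiv.Perm.mul_apply]
      refine ⟨?_, ?_⟩
      · rw [p1, ih.1, q1]
      · rw [p2, ih.2, ih.1, q2]
  refine Prod.ext (Equiv.ext fun i => ?_) (funext fun i => ?_)
  · obtain ⟨k, rfl⟩ := h a i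
    exact (key k).1
  · obtain ⟨k, rfl⟩ := h a i
    exact (key k).2

theorem aux_mem {r n : ℕ} (w v : Wreath r n) (s t : Finset (Fin n)) (hdis : Disjoint s t)
    (hun : s ∪ t = univ) (hso : IsOrbitSet w.1 s) (hto : IsOrbitSet w.1 t)
    (a : Fin n) (ha : a ∈ s)
    (h : IsFullCycle v.1) (hv : v * Wreath.bar v = w) : v.1 a ∈ t := by
  by_contra hcon
  have hy : v.1 a ∈ s := by
    have : v.1 a ∈ s ∪ t := by rw [hun]; exact mem_univ _
    exact (Finset.mem_union.mp this).resolve_right hcon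
  rw [aux_sq_iff] at hv
  have key : ∀ k : ℕ, (v.1 ^ k) a ∈ s ∧ v.1 ((v.1 ^ k) a) ∈ s := by
    intro k
    induction k with
    | zero => exact ⟨ha, hy⟩
    | succ k ih =>
      rw [pow_succ', Equiv.Perm.mul_apply]
      refine ⟨ih.2, ?_⟩
      rw [hv.1]; exact hso.2.1 _ ih.1
  obtain ⟨b, hb⟩ := hto.1
  obtain ⟨k, hk⟩ := h a b
  exact Finset.disjoint_left.mp hdis (hk ▸ (key k).1) hb

/-- **Absolute squares of single cycles, even length** (Observation, part 2):
for even `d = 2e`, if `v = (σ,z) ∈ G(r,d)` with `σ` a `d`-cycle, then `w := v·v̄`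
has `|w| = σ²` a product of two disjoint `e`-cycles whose supports partition
`{1,…,d}`, and total color `0`; and every `w` with `|w|` a product of two disjoint
`e`-cycles covering `{1,…,d}` and total color `0` arises from exactly
`r·d/2 = r·e` such `v`. -/
theorem absolute_square_of_even_cycle
    (r e : ℕ) [NeZero r] (he : 0 < e) :
    (∀ v : Wreath r (2 * e), IsFullCycle v.1 →
      (v * Wreath.bar v).1 = v.1 ^ 2 ∧ IsTwoCycles (v * Wreath.bar v).1 e ∧
        ∑ i, (v * Wreath.bar v).2 i = 0) ∧
    (∀ w : Wreath r (2 * e), IsTwoCycles w.1 e → ∑ i, w.2 i = 0 →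
      Nat.card {v : Wreath r (2 * e) // IsFullCycle v.1 ∧ v * Wreath.bar v = w} =
        r * (2 * e) / 2) := by
  refine ⟨fun v hv => ⟨(pow_two _).symm, ?_, ?_⟩, ?_⟩
  · have h : (v * Wreath.bar v).1 = v.1 ^ 2 := (pow_two _).symm
    rw [h]
    exact aux_two he v.1 hv
  · have key : ∀ i, (v * Wreath.bar v).2 i = v.2 (v.1 i) - v.2 i := fun i =>
      (sub_eq_add_neg _ _).symm
    rw [Finset.sum_congr rfl fun i _ => key i, Finset.sum_sub_distrib, Equiv.sum_comp v.1 v.2,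
      sub_self]
  · rintro w ⟨s, t, hdis, hun, hsc, htc, hso, hto⟩ h0
    obtain ⟨a, ha⟩ := hso.1
    let F : {v : Wreath r (2 * e) // IsFullCycle v.1 ∧ v * Wreath.bar v = w} → t × ZMod r :=
      fun v => ⟨⟨v.1.1 a, aux_mem w v.1 s t hdis hun hso hto a ha v.2.1 v.2.2⟩, v.1.2 a⟩
    have hF : Function.Bijective F := by
      constructor
      · rintro ⟨v, hv⟩ ⟨v', hv'⟩ hvv
        have h1 := congrArg (fun q => (q.1 : Fin (2 * e))) hvv
        have h2 := congrArg Prod.snd hvv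
        exact Subtype.ext (aux_inj w v v' a hv.1 hv.2 hv'.2 h1 h2)
      · rintro ⟨⟨b, hb⟩, c⟩
        obtain ⟨v, hv, h1, h2⟩ := aux_exists he w s t hun hsc htc hso hto h0 a b ha hb c
        exact ⟨⟨v, hv⟩, Prod.ext (Subtype.ext h1) h2⟩
    rw [Nat.card_eq_of_bijective F hF, Nat.card_prod, Nat.card_zmod, Nat.card_eq_fintype_card,
      Fintype.card_coe, htc, show r * (2 * e) = 2 * (e * r) by ring, Nat.mul_div_cancel_left _ two_pos]
end
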